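/- arXiv:2510.13469 — 2 statements merged into one kernel-verified Lean document; each statement's English description precedes it below -/
import Mathlib

section
/- Assume 3 ∤ σ and 3 ∤ N_{Z/ℚ}(η). Then for every k ≥ 2, every k×k matrix C with entries in the maximal order 𝔪 = I(λ) is a sum of cubes of k×k matrices with entries in 𝔪. -/
/-!
Matrices over the maximal order `I(λ)` in a cyclic division algebra of degree `n = 3`
over `ℚ` are sums of squares, provided `σ ≡ 1 (mod 2)`.
-/

set_option synthInstance.maxHeartbeats 1000000

noncomputable section

/-- `ζ = e^{2πi/p}`, a primitive `p`-th root of unity in `ℂ`. -/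
def zetaC (p : ℕ) : ℂ := Complex.exp (2 * Real.pi * Complex.I / p)

/-- The Gaussian period `η_s = ∑_{r=0}^{h-1} ζ^{g^{nr+s}}`. -/
def gaussPeriod (n p h g : ℕ) (s : ℕ) : ℂ :=
  ∑ r ∈ Finset.range h, zetaC p ^ (g ^ (n * r + s))

/-- `Z = ℚ(η)`, the subfield of `ℂ` generated over `ℚ` by the Gaussian period `η = η₀`. -/
def Zf (n p h g : ℕ) : IntermediateField ℚ ℂ :=
  IntermediateField.adjoin ℚ {gaussPeriod n p h g 0}

/-- `η` as an element of `Z = ℚ(η)`. -/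
def etaZ (n p h g : ℕ) : Zf n p h g :=
  ⟨gaussPeriod n p h g 0, IntermediateField.subset_adjoin ℚ _ rfl⟩

/-- `D(z) = diag(z, S(z), …, S^{n-1}(z))` in `M_n(Z)`. -/
def Dm (n p h g : ℕ) (S : Zf n p h g ≃ₐ[ℚ] Zf n p h g) (z : Zf n p h g) :
    Matrix (Fin n) (Fin n) (Zf n p h g) :=
  Matrix.diagonal fun i => (S ^ (i : ℕ)) z

/-- The matrix `U` with `U_{i+1,i} = 1`, `U_{1,n} = σ`, and `0` elsewhere
(indices written `0`-based). -/
def Um (n p h g : ℕ) (σ : ℕ) : Matrix (Fin n) (Fin n) (Zf n p h g) :=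
  Matrix.of fun i j =>
    if (i : ℕ) = (j : ℕ) + 1 then 1
    else if (i : ℕ) = 0 ∧ (j : ℕ) = n - 1 then (σ : Zf n p h g) else 0

/-- `Y = (1/p)·(λ·I − U)·D(α)` with `α = β^{n-1}`. -/
def Ym (n p h g σ : ℕ) (lam : ℤ) (S : Zf n p h g ≃ₐ[ℚ] Zf n p h g) (β : Zf n p h g) :
    Matrix (Fin n) (Fin n) (Zf n p h g) :=
  ((p : Zf n p h g)⁻¹) •
    (((lam : Zf n p h g) • (1 : Matrix (Fin n) (Fin n) (Zf n p h g)) - Um n p h g σ) *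
      Dm n p h g S (β ^ (n - 1)))

/-- The maximal order `I(λ)`: all `ℤ`-linear combinations of the `n²` matrices
`Y^i · D(η_s)`, `0 ≤ i, s ≤ n-1`. -/
def Iorder (n p h g σ : ℕ) (lam : ℤ) (S : Zf n p h g ≃ₐ[ℚ] Zf n p h g) (β : Zf n p h g) :
    Set (Matrix (Fin n) (Fin n) (Zf n p h g)) :=
  { M | ∃ c : Fin n → Fin n → ℤ,
      M = ∑ i : Fin n, ∑ s : Fin n,
        c i s • (Ym n p h g σ lam S β ^ (i : ℕ) *
          Dm n p h g S ((S ^ (s : ℕ)) (etaZ n p h g))) }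

/-!
Over any lattice containing `1`, cubes of matrices of size at least `2` generate the off-diagonal
matrix units and all `x Eᵢᵢ - x Eⱼⱼ`, hence, at a diagonal position, all commutators
`x y - y x`, all multiples `3 x` and all cubes `x ^ 3`. Because `3 x` is always available and
`p` is prime to `3`, denominators that are powers of `p` are harmless, so `I(λ)` may be replaced by
`⨁ Uⁱ D(O_Z)`. There the commutators of `Uⁱ` with `D(O_Z)` and with `U` identify `Uⁱ D(z)` with
`Uⁱ D(S z)`. The periods span `O_Z` and have trace `-1`, so modulo these relations `Uⁱ D(z)` depends
only on the trace of `z`, and it remains to find for each `i` an available `Uⁱ D(z)` with the trace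
of `z` prime to `3`. For `i = 0` the cube `η ^ 3` has trace congruent to `(-1) ^ 3` modulo `3`; for
`0 < i < n` the commutator of `D(x)` with `Uⁱ D(y)` gives `z = Sⁱ(x) y - x y`, whose trace is `-p`
for `y = η` and `x` the complex conjugate of `η`.
-/

section CubeSpan

open Matrix

variable {ι M : Type*} [DecidableEq ι] [Ring M] {R : AddSubgroup M}

lemma single_mem_addSubgroup_matrix {x : M} (hx : x ∈ R) (i j : ι) : single i j x ∈ R.matrix :=
  (single_mem_matrix R.zero_mem).2 hx

variable [Fintype ι]

/-- The additive group generated by the cubes of the square matrices with entries in `R`. As `R`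
is only an additive subgroup, `cubeSpan ι R` need not consist of matrices with entries in `R`. -/
def cubeSpan (ι : Type*) [Fintype ι] [DecidableEq ι] (R : AddSubgroup M) :
    AddSubgroup (Matrix ι ι M) :=
  AddSubgroup.closure {X | ∃ A : Matrix ι ι M, A ∈ R.matrix ∧ A ^ 3 = X}

lemma pow_three_mem_cubeSpan {A : Matrix ι ι M} (hA : A ∈ R.matrix) : A ^ 3 ∈ cubeSpan ι R :=
  AddSubgroup.subset_closure ⟨A, hA, rfl⟩

lemma mem_cubeSpan_of_isIdempotentElem {A : Matrix ι ι M} (hA : A ∈ R.matrix)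
    (h : IsIdempotentElem A) : A ∈ cubeSpan ι R :=
  h.pow_succ_eq 2 ▸ pow_three_mem_cubeSpan hA

lemma exists_eq_sum_pow_three_of_mem_cubeSpan {C : Matrix ι ι M} (hC : C ∈ cubeSpan ι R) :
    ∃ (m : ℕ) (A : Fin m → Matrix ι ι M), (∀ t, A t ∈ R.matrix) ∧ C = ∑ t, A t ^ 3 := by
  induction hC using AddSubgroup.closure_induction with
  | mem X hX =>
    obtain ⟨A, hA, rfl⟩ := hX
    exact ⟨1, fun _ => A, fun _ => hA, by simp⟩
  | zero => exact ⟨0, fun _ => 0, fun t => t.elim0, by simp⟩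
  | add X Y _ _ hX hY =>
    obtain ⟨m, A, hA, rfl⟩ := hX
    obtain ⟨m', B, hB, rfl⟩ := hY
    refine ⟨m + m', Fin.append A B, Fin.addCases (fun t => ?_) fun t => ?_, ?_⟩
    · simp only [Fin.sum_univ_add, Fin.append_left, Fin.append_right]
    · simpa only [Fin.append_left] using hA t
    · simpa only [Fin.append_right] using hB t
  | neg X _ hX =>
    obtain ⟨m, A, hA, rfl⟩ := hX
    refine ⟨m, fun t => -A t, fun t => neg_mem (hA t), ?_⟩
    simp only [Odd.neg_pow (show Odd 3 by decide), Finset.sum_neg_distrib]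

lemma single_self_one_mem_cubeSpan (h1 : (1 : M) ∈ R) (i : ι) :
    single i i (1 : M) ∈ cubeSpan ι R :=
  mem_cubeSpan_of_isIdempotentElem (single_mem_addSubgroup_matrix h1 i i)
    (by simp [IsIdempotentElem])

lemma single_mem_cubeSpan_of_ne (h1 : (1 : M) ∈ R) {i j : ι} (hij : i ≠ j) {x : M} (hx : x ∈ R) :
    single i j x ∈ cubeSpan ι R := by
  have idempotent_mem : single i i (1 : M) + single i j x ∈ cubeSpan ι R := by
    refine mem_cubeSpan_of_isIdempotentElem (add_mem (single_mem_addSubgroup_matrix h1 i i)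
      (single_mem_addSubgroup_matrix hx i j)) ?_
    simp [IsIdempotentElem, mul_add, add_mul, hij.symm]
  simpa using sub_mem idempotent_mem (single_self_one_mem_cubeSpan h1 i)

lemma single_mul_sub_single_mul_mem_cubeSpan (h1 : (1 : M) ∈ R) {i j : ι} (hij : i ≠ j) {x y : M}
    (hx : x ∈ R) (hy : y ∈ R) (hxy : x * y ∈ R) (hyx : y * x ∈ R) (hyxy : y * x * y ∈ R) :
    single i i (x * y) - single j j (y * x) ∈ cubeSpan ι R := by
  -- The column `(1, y)` times the row `(1 - xy, x)` is idempotent, as the row times the column is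
  -- `1`.
  have idempotent_mem : single i i 1 - single i i (x * y) + single i j x + single j i y
      - single j i (y * x * y) + single j j (y * x) ∈ cubeSpan ι R := by
    have hR {z : M} (hz : z ∈ R) (a b : ι) := single_mem_addSubgroup_matrix hz a b
    refine mem_cubeSpan_of_isIdempotentElem (add_mem (sub_mem (add_mem (add_mem
      (sub_mem (hR h1 _ _) (hR hxy _ _)) (hR hx _ _)) (hR hy _ _)) (hR hyxy _ _)) (hR hyx _ _)) ?_
    simp only [IsIdempotentElem, mul_add, add_mul, mul_sub, sub_mul, single_mul_single_same, ne_eq,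
      hij, hij.symm, not_false_eq_true, single_mul_single_of_ne, mul_one, one_mul, mul_assoc]
    abel
  have offDiagonal_mem : single i j x + single j i y - single j i (y * x * y) ∈ cubeSpan ι R :=
    sub_mem (add_mem (single_mem_cubeSpan_of_ne h1 hij hx)
      (single_mem_cubeSpan_of_ne h1 hij.symm hy)) (single_mem_cubeSpan_of_ne h1 hij.symm hyxy)
  convert sub_mem (add_mem (single_self_one_mem_cubeSpan h1 i) offDiagonal_mem) idempotent_mem
    using 1
  abel

lemma single_self_sub_single_self_mem_cubeSpan (h1 : (1 : M) ∈ R) {i j : ι} (hij : i ≠ j) {x : M}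
    (hx : x ∈ R) : single i i x - single j j x ∈ cubeSpan ι R := by
  simpa using single_mul_sub_single_mul_mem_cubeSpan (y := 1) h1 hij hx h1 (by simpa) (by simpa)
    (by simpa)

/-- The elements `x` whose diagonal matrix unit multiple `x Eᵢᵢ` is a sum of cubes of matrices
over `R` (up to signs, which cubes absorb). -/
def cubeSpanCorner (R : AddSubgroup M) (i : ι) : AddSubgroup M :=
  (cubeSpan ι R).comap (singleAddMonoidHom i i)

lemma mem_cubeSpanCorner {i : ι} {x : M} : x ∈ cubeSpanCorner R i ↔ single i i x ∈ cubeSpan ι R :=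
  Iff.rfl

lemma pow_three_mem_cubeSpanCorner {x : M} (hx : x ∈ R) (i : ι) : x ^ 3 ∈ cubeSpanCorner R i := by
  simpa [mem_cubeSpanCorner, pow_succ] using
    pow_three_mem_cubeSpan (single_mem_addSubgroup_matrix hx i i)

lemma matrix_le_cubeSpan_of_le_cubeSpanCorner (h1 : (1 : M) ∈ R) {i : ι}
    (h : R ≤ cubeSpanCorner R i) : R.matrix ≤ cubeSpan ι R := by
  intro C hC
  rw [matrix_eq_sum_single C]
  refine sum_mem fun a _ => sum_mem fun b _ => ?_
  obtain rfl | hab := eq_or_ne a b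
  · obtain rfl | hai := eq_or_ne a i
    · exact h (hC a a)
    · simpa using add_mem (single_self_sub_single_self_mem_cubeSpan h1 hai (hC a a)) (h (hC a a))
  · exact single_mem_cubeSpan_of_ne h1 hab (hC a b)

variable [Nontrivial ι]

lemma mul_sub_mul_mem_cubeSpanCorner (h1 : (1 : M) ∈ R) (i : ι) {x y : M}
    (hx : x ∈ R) (hy : y ∈ R) (hxy : x * y ∈ R) (hyx : y * x ∈ R) (hyxy : y * x * y ∈ R) :
    x * y - y * x ∈ cubeSpanCorner R i := by
  obtain ⟨j, hji⟩ := exists_ne i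
  have split : single i i (x * y - y * x) = (single i i (x * y) - single j j (y * x)) -
      (single i i (y * x) - single j j (y * x)) := by
    rw [sub_sub_sub_cancel_right]
    exact map_sub (singleAddMonoidHom i i) _ _
  rw [mem_cubeSpanCorner, split]
  exact sub_mem (single_mul_sub_single_mul_mem_cubeSpan h1 hji.symm hx hy hxy hyx hyxy)
    (single_self_sub_single_self_mem_cubeSpan h1 hji.symm hyx)

lemma three_zsmul_mem_cubeSpanCorner (h1 : (1 : M) ∈ R) (i : ι) {x : M} (hx : x ∈ R) :
    (3 : ℤ) • x ∈ cubeSpanCorner R i := by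
  obtain ⟨j, hji⟩ := exists_ne i
  have hij := hji.symm
  have hR {z : M} (hz : z ∈ R) (a b : ι) := single_mem_addSubgroup_matrix hz a b
  have cubes_mem : (single i i (1 : M) + single j i 1 + single i j x) ^ 3 -
      (single j i 1 + single i j x) ^ 3 ∈ cubeSpan ι R :=
    sub_mem (pow_three_mem_cubeSpan (add_mem (add_mem (hR h1 _ _) (hR h1 _ _)) (hR hx _ _)))
      (pow_three_mem_cubeSpan (add_mem (hR h1 _ _) (hR hx _ _)))
  have cubes_eq : (single i i (1 : M) + single j i 1 + single i j x) ^ 3 -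
      (single j i 1 + single i j x) ^ 3 = single i i 1 + single i j x + single j i 1 +
        single i i x + single i i x + single j j x := by
    simp only [pow_succ, pow_zero, one_mul, mul_add, add_mul, single_mul_single_same, ne_eq, hij,
      hij.symm, not_false_eq_true, single_mul_single_of_ne, mul_one, zero_mul]
    abel
  rw [cubes_eq] at cubes_mem
  have others_mem : single i i (1 : M) + single i j x + single j i 1 -
      (single i i x - single j j x) ∈ cubeSpan ι R :=
    sub_mem (add_mem (add_mem (single_self_one_mem_cubeSpan h1 i)
      (single_mem_cubeSpan_of_ne h1 hij hx)) (single_mem_cubeSpan_of_ne h1 hji h1))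
      (single_self_sub_single_self_mem_cubeSpan h1 hij hx)
  have three_eq : (3 : ℤ) • x = x + x + x := by abel
  rw [mem_cubeSpanCorner, three_eq, single_add, single_add]
  convert sub_mem cubes_mem others_mem using 1
  abel

end CubeSpan

section PowSaturation

variable {M N : Type*} [AddCommGroup M] [AddCommGroup N] {d : ℤ} {A : AddSubgroup M}
  {B : AddSubgroup N}

lemma mem_of_isCoprime_of_zsmul_mem {a b : ℤ} (hab : IsCoprime a b) {x : M} (ha : a • x ∈ A)
    (hb : b • x ∈ A) : x ∈ A := by
  obtain ⟨u, v, huv⟩ := hab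
  rw [← one_zsmul x, ← huv, add_zsmul, mul_zsmul, mul_zsmul]
  exact add_mem (zsmul_mem ha u) (zsmul_mem hb v)

lemma pow_zsmul_mem_of_le {e e' : ℕ} (hle : e ≤ e') {x : M} (hx : d ^ e • x ∈ A) :
    d ^ e' • x ∈ A := by
  rw [← Nat.sub_add_cancel hle, pow_add, mul_zsmul]
  exact zsmul_mem hx _

/-- The elements that some power of `d` multiplies into `A`: the preimage in `M` of the
localization of `A` away from `d`. -/
def powSaturation (d : ℤ) (A : AddSubgroup M) : AddSubgroup M where
  carrier := {x | ∃ e : ℕ, d ^ e • x ∈ A}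
  zero_mem' := ⟨0, by simp⟩
  add_mem' := by
    rintro x y ⟨e, hx⟩ ⟨f, hy⟩
    refine ⟨e + f, ?_⟩
    rw [zsmul_add]
    exact add_mem (pow_zsmul_mem_of_le (Nat.le_add_right e f) hx)
      (pow_zsmul_mem_of_le (Nat.le_add_left f e) hy)
  neg_mem' := by
    rintro x ⟨e, hx⟩
    exact ⟨e, by simpa using hx⟩

lemma le_powSaturation : A ≤ powSaturation d A := fun x hx => ⟨0, by simpa using hx⟩

lemma mem_powSaturation_of_pow_zsmul_mem {e : ℕ} {x : M} (hx : d ^ e • x ∈ powSaturation d A) :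
    x ∈ powSaturation d A := by
  obtain ⟨f, hf⟩ := hx
  exact ⟨f + e, by rwa [pow_add, mul_zsmul]⟩

lemma map_mem_powSaturation (f : M →+ N) (hf : ∀ x ∈ A, f x ∈ powSaturation d B) {x : M}
    (hx : x ∈ powSaturation d A) : f x ∈ powSaturation d B := by
  obtain ⟨e, he⟩ := hx
  exact mem_powSaturation_of_pow_zsmul_mem (e := e) (by simpa only [map_zsmul] using hf _ he)

lemma powSaturation_le_of_le {A' : AddSubgroup M} (h : A ≤ powSaturation d A') :
    powSaturation d A ≤ powSaturation d A' :=
  fun _ => map_mem_powSaturation (AddMonoidHom.id M) h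

lemma mem_of_mem_powSaturation {a : ℤ} (had : IsCoprime a d) {x : M} (hx : x ∈ powSaturation d A)
    (ha : a • x ∈ A) : x ∈ A := by
  obtain ⟨e, he⟩ := hx
  exact mem_of_isCoprime_of_zsmul_mem had.pow_right ha he

lemma exists_forall_pow_zsmul_mem {s : Set M} (hs : s.Finite) (hsA : s ⊆ powSaturation d A) :
    ∃ e : ℕ, ∀ x ∈ s, d ^ e • x ∈ A := by
  choose! e he using hsA
  obtain ⟨b, hb⟩ := (hs.image e).bddAbove
  exact ⟨b, fun x hx => pow_zsmul_mem_of_le (hb ⟨x, hx, rfl⟩) (he hx)⟩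

end PowSaturation

section SaturatedCubes

variable {ι M : Type*} [Fintype ι] [DecidableEq ι] [Ring M] {R : AddSubgroup M} {d : ℤ} {i : ι}
  {x y : M}

lemma pow_three_mem_powSaturation_cubeSpanCorner (hx : x ∈ powSaturation d R) :
    x ^ 3 ∈ powSaturation d (cubeSpanCorner R i) := by
  obtain ⟨e, he⟩ := hx
  exact ⟨e * 3, by simpa only [smul_pow, ← pow_mul] using pow_three_mem_cubeSpanCorner he i⟩

variable [Nontrivial ι]

lemma three_zsmul_mem_powSaturation_cubeSpanCorner (h1 : (1 : M) ∈ R)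
    (hx : x ∈ powSaturation d R) : (3 : ℤ) • x ∈ powSaturation d (cubeSpanCorner R i) :=
  map_mem_powSaturation (zsmulAddGroupHom 3)
    (fun _ hz => le_powSaturation (three_zsmul_mem_cubeSpanCorner h1 i hz)) hx

lemma mul_sub_mul_mem_powSaturation_cubeSpanCorner (h1 : (1 : M) ∈ R)
    (hx : x ∈ powSaturation d R) (hy : y ∈ powSaturation d R) (hxy : x * y ∈ powSaturation d R)
    (hyx : y * x ∈ powSaturation d R) (hyxy : y * x * y ∈ powSaturation d R) :
    x * y - y * x ∈ powSaturation d (cubeSpanCorner R i) := by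
  obtain ⟨e, he⟩ := exists_forall_pow_zsmul_mem (Set.toFinite {x, y, x * y, y * x, y * x * y})
    (show {x, y, x * y, y * x, y * x * y} ⊆ (powSaturation d R : Set M) by
      simp [Set.insert_subset_iff, hx, hy, hxy, hyx, hyxy])
  have scaled {f : ℕ} (hf : e ≤ f) {z : M} (hz : z ∈ ({x, y, x * y, y * x, y * x * y} : Set M)) :
      d ^ f • z ∈ R := pow_zsmul_mem_of_le hf (he z hz)
  have hcomm : d ^ e • x * d ^ e • y - d ^ e • y * d ^ e • x ∈ cubeSpanCorner R i := by
    refine mul_sub_mul_mem_cubeSpanCorner h1 i (scaled le_rfl (by simp)) (scaled le_rfl (by simp))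
      ?_ ?_ ?_ <;>
    simp only [smul_mul_smul_comm, ← pow_add] <;>
    exact scaled (by omega) (by simp)
  refine ⟨e + e, ?_⟩
  rwa [smul_mul_smul_comm, smul_mul_smul_comm, ← pow_add, ← zsmul_sub] at hcomm

lemma matrix_le_cubeSpan_of_le_powSaturation (h1 : (1 : M) ∈ R) (hd : IsCoprime 3 d)
    (h : R ≤ powSaturation d (cubeSpanCorner R i)) : R.matrix ≤ cubeSpan ι R :=
  matrix_le_cubeSpan_of_le_cubeSpanCorner h1 fun _ hx =>
    mem_of_mem_powSaturation hd (h hx) (three_zsmul_mem_cubeSpanCorner h1 i hx)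

end SaturatedCubes

section PowerLattice

variable {O M : Type*} [CommRing O] [Ring M]

/-- The additive group `∑_{i < n} Uⁱ D(O)`. Both the maximal order `I(λ)` (for `U = Y`) and the
order generated by `U` and `D(O)` have this shape. -/
def powerLattice (D : O →+* M) (U : M) (n : ℕ) : AddSubgroup M :=
  AddSubgroup.closure {x | ∃ i < n, ∃ z : O, U ^ i * D z = x}

variable {D : O →+* M} {U V : M} {m n i : ℕ}

lemma pow_mul_mem_powerLattice (hi : i < n) (z : O) : U ^ i * D z ∈ powerLattice D U n :=
  AddSubgroup.subset_closure ⟨i, hi, z, rfl⟩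

lemma map_mem_powerLattice (hn : 0 < n) (z : O) : D z ∈ powerLattice D U n := by
  simpa using pow_mul_mem_powerLattice (D := D) (U := U) hn z

lemma powerLattice_le {K : AddSubgroup M} (h : ∀ i < n, ∀ z : O, U ^ i * D z ∈ K) :
    powerLattice D U n ≤ K := by
  rw [powerLattice, AddSubgroup.closure_le]
  rintro _ ⟨i, hi, z, rfl⟩
  exact h i hi z

lemma mem_powerLattice_iff_exists_sum {κ : Type*} [Fintype κ] {b : κ → O}
    (hb : AddSubgroup.closure (Set.range b) = ⊤) {x : M} :
    x ∈ powerLattice D U n ↔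
      ∃ c : Fin n → κ → ℤ, x = ∑ i, ∑ s, c i s • (U ^ (i : ℕ) * D (b s)) := by
  refine ⟨fun hx => ?_, ?_⟩
  · have le_closure : powerLattice D U n ≤ AddSubgroup.closure
        (Set.range fun k : Fin n × κ => U ^ (k.1 : ℕ) * D (b k.2)) := by
      refine powerLattice_le fun i hi z => ?_
      obtain ⟨c, rfl⟩ := AddSubgroup.mem_closure_range_iff_of_fintype.1
        (hb ▸ AddSubgroup.mem_top z)
      simp only [map_sum, map_zsmul, Finset.mul_sum, mul_smul_comm]
      exact sum_mem fun s _ => zsmul_mem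
        (AddSubgroup.subset_closure (Set.mem_range_self ((⟨i, hi⟩, s) : Fin n × κ))) _
    obtain ⟨c, rfl⟩ := AddSubgroup.mem_closure_range_iff_of_fintype.1 (le_closure hx)
    exact ⟨fun i s => c (i, s), Fintype.sum_prod_type _⟩
  · rintro ⟨c, rfl⟩
    exact sum_mem fun i _ => sum_mem fun s _ =>
      zsmul_mem (pow_mul_mem_powerLattice i.isLt (b s)) _

lemma powerLattice_mono (hmn : m ≤ n) : powerLattice D U m ≤ powerLattice D U n :=
  powerLattice_le fun _ hi => pow_mul_mem_powerLattice (hi.trans_le hmn)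

lemma mul_mem_powerLattice_succ {x : M} (hx : x ∈ powerLattice D U m) :
    U * x ∈ powerLattice D U (m + 1) := by
  suffices h : powerLattice D U m ≤
      (powerLattice D U (m + 1)).comap (AddMonoidHom.mulLeft U) from h hx
  refine powerLattice_le fun i hi z => ?_
  rw [AddSubgroup.mem_comap, AddMonoidHom.coe_mulLeft, ← mul_assoc, ← pow_succ']
  exact pow_mul_mem_powerLattice (Nat.succ_lt_succ hi) z

lemma powerLattice_le_powSaturation_of_mul_mem {d : ℤ}
    (hU : ∀ m, ∀ x ∈ powerLattice D V m, U * x ∈ powSaturation d (powerLattice D V (m + 1))) :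
    powerLattice D U n ≤ powSaturation d (powerLattice D V n) := by
  have pow_mul_mem (i : ℕ) (z : O) :
      U ^ i * D z ∈ powSaturation d (powerLattice D V (i + 1)) := by
    induction i with
    | zero => simpa using le_powSaturation (map_mem_powerLattice one_pos z)
    | succ i ih =>
      rw [pow_succ', mul_assoc]
      exact map_mem_powSaturation (AddMonoidHom.mulLeft U) (hU (i + 1)) ih
  exact powerLattice_le fun i hi z =>
    powSaturation_le_of_le ((powerLattice_mono hi).trans le_powSaturation) (pow_mul_mem i z)

section Semilinear

variable {S : O →+* O}

lemma map_mul_pow_of_map_mul (hDU : ∀ z, D z * U = U * D (S z)) (j : ℕ) (z : O) :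
    D z * U ^ j = U ^ j * D ((S ^ j) z) := by
  induction j with
  | zero => simp
  | succ j ih => rw [pow_succ, ← mul_assoc, ih, mul_assoc, hDU, ← mul_assoc, pow_succ' S]; rfl

lemma pow_mul_map_mul_pow_mul_map (hDU : ∀ z, D z * U = U * D (S z)) (i j : ℕ) (z w : O) :
    U ^ i * D z * (U ^ j * D w) = U ^ (i + j) * D ((S ^ j) z * w) := by
  rw [mul_assoc, ← mul_assoc (D z), map_mul_pow_of_map_mul hDU, pow_add, map_mul]
  simp only [mul_assoc]

variable {Y : M} {p lam : ℤ} {α : O}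

lemma mul_mem_powSaturation_powerLattice (hDU : ∀ z, D z * U = U * D (S z))
    (hY : p • Y = ((lam : M) - U) * D α) {x : M} (hx : x ∈ powerLattice D U m) :
    Y * x ∈ powSaturation p (powerLattice D U (m + 1)) := by
  suffices h : powerLattice D U m ≤
      (powSaturation p (powerLattice D U (m + 1))).comap (AddMonoidHom.mulLeft Y) from h hx
  refine powerLattice_le fun j hj v => ⟨1, ?_⟩
  have expand : p ^ 1 • (Y * (U ^ j * D v)) =
      lam • (U ^ j * D ((S ^ j) α * v)) - U ^ (j + 1) * D ((S ^ j) α * v) := by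
    rw [pow_one, ← smul_mul_assoc, hY, mul_assoc, ← mul_assoc (D α), map_mul_pow_of_map_mul hDU,
      mul_assoc, ← map_mul, sub_mul, zsmul_eq_mul, pow_succ', mul_assoc]
  rw [AddMonoidHom.coe_mulLeft, expand]
  exact sub_mem (zsmul_mem (pow_mul_mem_powerLattice (by omega) _) _)
    (pow_mul_mem_powerLattice (by omega) _)

lemma zsmul_map_mul_eq (hDU : ∀ z, D z * U = U * D (S z)) (hY : p • Y = ((lam : M) - U) * D α)
    (z : O) : p • (D z * Y) = p • (Y * D (S z)) + lam • D ((z - S z) * α) := by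
  have hα : D α * D (S z) = D (S z) * D α := by rw [← map_mul, ← map_mul, mul_comm]
  rw [← mul_smul_comm, ← smul_mul_assoc, hY, zsmul_eq_mul, map_mul, map_sub, ← mul_assoc, mul_sub,
    hDU, ← (Int.cast_commute lam (D z)).eq, mul_assoc _ (D α), hα]
  noncomm_ring

lemma map_mul_mem_powSaturation_powerLattice (hDU : ∀ z, D z * U = U * D (S z))
    (hY : p • Y = ((lam : M) - U) * D α) (z : O) {x : M} (hx : x ∈ powerLattice D Y m) :
    D z * x ∈ powSaturation p (powerLattice D Y m) := by
  have map_mul_pow_mem (j : ℕ) (z v : O) :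
      D z * (Y ^ j * D v) ∈ powSaturation p (powerLattice D Y (j + 1)) := by
    induction j generalizing z with
    | zero => simpa using le_powSaturation (map_mem_powerLattice (D := D) one_pos (z * v))
    | succ j ih =>
      have expand : p ^ 1 • (D z * (Y ^ (j + 1) * D v)) =
          p • (Y * (D (S z) * (Y ^ j * D v))) + lam • (D ((z - S z) * α) * (Y ^ j * D v)) := by
        rw [pow_one, pow_succ', mul_assoc, ← mul_assoc (D z), ← smul_mul_assoc,
          zsmul_map_mul_eq hDU hY, add_mul, smul_mul_assoc, smul_mul_assoc, mul_assoc Y]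
      refine mem_powSaturation_of_pow_zsmul_mem (e := 1) ?_
      rw [expand]
      exact add_mem (zsmul_mem (map_mem_powSaturation (AddMonoidHom.mulLeft Y)
          (fun _ hy => le_powSaturation (mul_mem_powerLattice_succ hy)) (ih _)) _)
        (zsmul_mem (powSaturation_le_of_le
          ((powerLattice_mono (Nat.le_succ _)).trans le_powSaturation) (ih _)) _)
  suffices h : powerLattice D Y m ≤
      (powSaturation p (powerLattice D Y m)).comap (AddMonoidHom.mulLeft (D z)) from h hx
  exact powerLattice_le fun j hj v => powSaturation_le_of_le
    ((powerLattice_mono hj).trans le_powSaturation) (map_mul_pow_mem j z v)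

lemma mul_mem_powSaturation_powerLattice_of_dvd (hDU : ∀ z, D z * U = U * D (S z))
    (hY : p • Y = ((lam : M) - U) * D α) {N : ℕ} (hα : α ∣ (p : O) ^ N) {x : M}
    (hx : x ∈ powerLattice D Y m) : U * x ∈ powSaturation p (powerLattice D Y (m + 1)) := by
  obtain ⟨α', hα'⟩ := hα
  have expand : p ^ N • (U * x) = (p ^ N * lam) • x - p • (Y * (D α' * x)) := by
    have scalar : D α * D α' = (p ^ N : ℤ) := by
      rw [← map_mul, ← hα', ← Int.cast_pow, map_intCast]
    rw [← smul_mul_assoc p, hY, mul_assoc, ← mul_assoc (D α), scalar, ← mul_assoc,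
      ← (Int.cast_commute _ _).eq, mul_assoc, ← zsmul_eq_mul, sub_mul, zsmul_sub, mul_zsmul,
      zsmul_eq_mul x lam, sub_sub_cancel]
  refine mem_powSaturation_of_pow_zsmul_mem (e := N) ?_
  rw [expand]
  exact sub_mem (zsmul_mem (le_powSaturation (powerLattice_mono (Nat.le_succ m) hx)) _)
    (zsmul_mem (map_mem_powSaturation (AddMonoidHom.mulLeft Y)
      (fun _ hy => le_powSaturation (mul_mem_powerLattice_succ hy))
      (map_mul_mem_powSaturation_powerLattice hDU hY α' hx)) _)

end Semilinear

lemma pow_mul_mem_powerLattice_of_pow_eq {σ : ℤ} (hn : 0 < n) (hU : U ^ n = σ) (i : ℕ) (z : O) :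
    U ^ i * D z ∈ powerLattice D U n := by
  have reduce : U ^ i * D z = σ ^ (i / n) • (U ^ (i % n) * D z) := by
    conv_lhs => rw [← Nat.div_add_mod i n, pow_add, pow_mul, hU]
    rw [zsmul_eq_mul, mul_assoc, Int.cast_pow]
  rw [reduce]
  exact zsmul_mem (pow_mul_mem_powerLattice (Nat.mod_lt i hn) z) _

end PowerLattice

section OrbitSum

variable {O : Type*} [CommRing O] {S : O →+* O} {n : ℕ}

/-- The sum `z + S z + ⋯ + Sⁿ⁻¹ z`, which is the trace of `z` when `S` generates a Galois group of
order `n`. -/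
def orbitSum (S : O →+* O) (n : ℕ) : O →+ O :=
  ∑ s ∈ Finset.range n, ((S ^ s : O →+* O) : O →+ O)

lemma orbitSum_apply (z : O) : orbitSum S n z = ∑ s ∈ Finset.range n, (S ^ s) z := by
  simp [orbitSum]

lemma orbitSum_pow_map (hSn : S ^ n = 1) (z : O) (s : ℕ) :
    orbitSum S n ((S ^ s) z) = orbitSum S n z := by
  have orbitSum_map (w : O) : orbitSum S n (S w) = orbitSum S n w := by
    have h := (Finset.sum_range_succ (fun s => (S ^ s) w) n).symm.trans
      (Finset.sum_range_succ' (fun s => (S ^ s) w) n)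
    rw [hSn, pow_zero, add_left_inj] at h
    rw [orbitSum_apply, orbitSum_apply, h]
    simp only [pow_succ, RingHom.mul_def, RingHom.comp_apply]
  induction s with
  | zero => rw [pow_zero, RingHom.one_def, RingHom.id_apply]
  | succ s ih => rw [pow_succ', RingHom.mul_def, RingHom.comp_apply, orbitSum_map, ih]

lemma natCast_dvd_sum_pow_sub_sum_pow {ι : Type*} {q : ℕ} (hq : q.Prime) (s : Finset ι)
    (f : ι → O) : (q : O) ∣ ∑ i ∈ s, f i ^ q - (∑ i ∈ s, f i) ^ q := by
  classical
  induction s using Finset.induction_on with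
  | empty => simp [hq.ne_zero]
  | insert a s ha ih =>
    obtain ⟨r, hr⟩ := exists_add_pow_prime_eq hq (f a) (∑ i ∈ s, f i)
    obtain ⟨t, ht⟩ := ih
    refine ⟨t - f a * (∑ i ∈ s, f i) * r, ?_⟩
    rw [Finset.sum_insert ha, Finset.sum_insert ha, hr]
    linear_combination ht

lemma natCast_dvd_orbitSum_pow_sub {q : ℕ} (hq : q.Prime) (z : O) :
    (q : O) ∣ orbitSum S n (z ^ q) - orbitSum S n z ^ q := by
  simpa only [orbitSum_apply, map_pow] using natCast_dvd_sum_pow_sub_sum_pow hq _ _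

variable {K : AddSubgroup O} {e : O}

lemma sub_pow_map_mem (hK : ∀ z, z - S z ∈ K) (z : O) (s : ℕ) : z - (S ^ s) z ∈ K := by
  induction s with
  | zero => simp
  | succ s ih =>
    rw [pow_succ', RingHom.mul_def, RingHom.comp_apply]
    simpa using add_mem ih (hK ((S ^ s) z))

lemma exists_sub_zsmul_mem_and_orbitSum_eq (hSn : S ^ n = 1) (hK : ∀ z, z - S z ∈ K)
    (hspan : AddSubgroup.closure (Set.range fun s : ℕ => (S ^ s) e) = ⊤) (z : O) :
    ∃ c : ℤ, z - c • e ∈ K ∧ orbitSum S n z = c • orbitSum S n e := by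
  have hz : z ∈ AddSubgroup.closure (Set.range fun s : ℕ => (S ^ s) e) := hspan ▸ trivial
  induction hz using AddSubgroup.closure_induction with
  | mem x hx =>
    obtain ⟨s, rfl⟩ := hx
    refine ⟨1, ?_, by simpa using orbitSum_pow_map hSn e s⟩
    simpa using neg_mem (sub_pow_map_mem hK e s)
  | zero => exact ⟨0, by simp⟩
  | add x y _ _ hx hy =>
    obtain ⟨a, ha, hax⟩ := hx
    obtain ⟨b, hb, hby⟩ := hy
    refine ⟨a + b, ?_, by rw [map_add, hax, hby, add_zsmul]⟩
    simpa only [add_zsmul, add_sub_add_comm] using add_mem ha hb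
  | neg x _ hx =>
    obtain ⟨a, ha, hax⟩ := hx
    refine ⟨-a, ?_, by rw [map_neg, hax, neg_zsmul]⟩
    simpa only [neg_zsmul, neg_sub_neg, neg_sub] using neg_mem ha

/-- Modulo the differences `z - S z`, the ring `O` is generated by `e`, and the coefficient of `e`
is detected by the trace. -/
lemma eq_top_of_dvd_orbitSum_sub {d m : ℤ} (hSn : S ^ n = 1)
    (hspan : AddSubgroup.closure (Set.range fun s : ℕ => (S ^ s) e) = ⊤)
    (he : orbitSum S n e = -1) (hK : ∀ z, z - S z ∈ K) (hd : ∀ z, d • z ∈ K) (hmd : IsCoprime m d)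
    {z : O} (hz : z ∈ K) (hzm : (d : O) ∣ orbitSum S n z - m) : K = ⊤ := by
  have reduce := exists_sub_zsmul_mem_and_orbitSum_eq hSn hK hspan
  suffices he' : e ∈ K by
    refine (AddSubgroup.eq_top_iff' K).2 fun w => ?_
    obtain ⟨c, hc, -⟩ := reduce w
    simpa using add_mem hc (zsmul_mem he' c)
  obtain ⟨c, hc, hcz⟩ := reduce z
  obtain ⟨w, hw⟩ := hzm
  refine mem_of_isCoprime_of_zsmul_mem hmd ?_ (hd e)
  have hme : m • e = -(c • e) - d • (w * e) := by
    rw [hcz, he] at hw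
    simp only [zsmul_eq_mul] at hw ⊢
    linear_combination (-e) * hw
  rw [hme]
  exact sub_mem (neg_mem (by simpa using sub_mem hz hc)) (hd _)

end OrbitSum

section Monomials

variable {O M : Type*} [CommRing O] [Ring M] {D : O →+* M} {S : O →+* O} {U : M} {n i : ℕ}
  {P : AddSubgroup M}

/-- The elements `z` for which the monomial `Uⁱ D(z)` lies in `P`. -/
def monomialCoeffs (P : AddSubgroup M) (D : O →+* M) (U : M) (i : ℕ) : AddSubgroup O :=
  P.comap ((AddMonoidHom.mulLeft (U ^ i)).comp (D : O →+ M))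

lemma mem_monomialCoeffs {z : O} : z ∈ monomialCoeffs P D U i ↔ U ^ i * D z ∈ P := Iff.rfl

lemma sub_map_mem_monomialCoeffs_succ (hDU : ∀ z, D z * U = U * D (S z))
    (hcomm : ∀ i j z w, U ^ i * D z * (U ^ j * D w) - U ^ j * D w * (U ^ i * D z) ∈ P)
    (i : ℕ) (z : O) : z - S z ∈ monomialCoeffs P D U (i + 1) := by
  have h := hcomm 1 i 1 z
  rw [pow_mul_map_mul_pow_mul_map hDU, pow_mul_map_mul_pow_mul_map hDU, add_comm 1 i, ← mul_sub,
    ← map_sub] at h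
  simpa only [mem_monomialCoeffs, map_one, one_mul, mul_one, pow_one] using h

lemma sub_map_mem_monomialCoeffs {q σ : ℤ} (hn : 0 < n) (hDU : ∀ z, D z * U = U * D (S z))
    (hU : U ^ n = σ) (hσ : IsCoprime σ q)
    (hcomm : ∀ i j z w, U ^ i * D z * (U ^ j * D w) - U ^ j * D w * (U ^ i * D z) ∈ P)
    (hq : ∀ i z, q • (U ^ i * D z) ∈ P) (i : ℕ) (z : O) :
    z - S z ∈ monomialCoeffs P D U i := by
  cases i with
  | succ i => exact sub_map_mem_monomialCoeffs_succ hDU hcomm i z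
  | zero =>
    have h := sub_map_mem_monomialCoeffs_succ hDU hcomm (n - 1) z
    rw [Nat.sub_add_cancel hn, mem_monomialCoeffs, hU, ← zsmul_eq_mul] at h
    rw [mem_monomialCoeffs, pow_zero, one_mul]
    exact mem_of_isCoprime_of_zsmul_mem hσ h (by simpa using hq 0 (z - S z))

lemma pow_map_mul_sub_mem_monomialCoeffs (hDU : ∀ z, D z * U = U * D (S z))
    (hcomm : ∀ i j z w, U ^ i * D z * (U ^ j * D w) - U ^ j * D w * (U ^ i * D z) ∈ P)
    (i : ℕ) (x y : O) : (S ^ i) x * y - x * y ∈ monomialCoeffs P D U i := by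
  have h := hcomm 0 i x y
  rw [pow_mul_map_mul_pow_mul_map hDU, pow_mul_map_mul_pow_mul_map hDU, zero_add, add_zero,
    ← mul_sub, ← map_sub] at h
  simpa only [mem_monomialCoeffs, pow_zero, RingHom.one_def, RingHom.id_apply,
    mul_comm y x] using h

lemma monomialCoeffs_eq_top {q : ℕ} {σ : ℤ} {e : O} (hq : q.Prime) (hn : 0 < n) (hSn : S ^ n = 1)
    (hDU : ∀ z, D z * U = U * D (S z)) (hU : U ^ n = σ) (hσ : IsCoprime σ q)
    (hspan : AddSubgroup.closure (Set.range fun s : ℕ => (S ^ s) e) = ⊤)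
    (he : orbitSum S n e = -1)
    (htrace : ∀ i, 0 < i → i < n → ∃ (x y : O) (m : ℤ), IsCoprime m q ∧
      orbitSum S n ((S ^ i) x * y - x * y) = m)
    (hcomm : ∀ i j z w, U ^ i * D z * (U ^ j * D w) - U ^ j * D w * (U ^ i * D z) ∈ P)
    (hsmul : ∀ i z, (q : ℤ) • (U ^ i * D z) ∈ P) (hpow : ∀ z, D z ^ q ∈ P) (hi : i < n) :
    monomialCoeffs P D U i = ⊤ := by
  have hdiff := sub_map_mem_monomialCoeffs hn hDU hU hσ hcomm hsmul i
  have hdiv (z : O) : (q : ℤ) • z ∈ monomialCoeffs P D U i := by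
    rw [mem_monomialCoeffs, map_zsmul, mul_smul_comm]
    exact hsmul i z
  rcases i.eq_zero_or_pos with rfl | hi0
  · have pow_mem : e ^ q ∈ monomialCoeffs P D U 0 := by
      rw [mem_monomialCoeffs, pow_zero, one_mul, map_pow]
      exact hpow e
    refine eq_top_of_dvd_orbitSum_sub hSn hspan he hdiff hdiv (m := (-1) ^ q)
      isCoprime_one_left.neg_left.pow_left pow_mem ?_
    simpa only [he, Int.cast_pow, Int.cast_neg, Int.cast_one, Int.cast_natCast] using
      natCast_dvd_orbitSum_pow_sub (S := S) (n := n) hq e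
  · obtain ⟨x, y, m, hm, hxy⟩ := htrace i hi0 hi
    refine eq_top_of_dvd_orbitSum_sub hSn hspan he hdiff hdiv hm
      (pow_map_mul_sub_mem_monomialCoeffs hDU hcomm i x y) ?_
    rw [hxy, sub_self]
    exact dvd_zero _

theorem matrix_powerLattice_le_cubeSpan {ι : Type*} [Fintype ι] [DecidableEq ι] [Nontrivial ι]
    {Y : M} {p σ lam : ℤ} {α e : O} {N : ℕ} (hn : 0 < n) (hSn : S ^ n = 1)
    (hDU : ∀ z, D z * U = U * D (S z)) (hU : U ^ n = σ) (hσ : IsCoprime σ 3) (hp : IsCoprime 3 p)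
    (hY : p • Y = ((lam : M) - U) * D α) (hα : α ∣ (p : O) ^ N)
    (hspan : AddSubgroup.closure (Set.range fun s : ℕ => (S ^ s) e) = ⊤)
    (he : orbitSum S n e = -1)
    (htrace : ∀ i, 0 < i → i < n → ∃ (x y : O) (m : ℤ), IsCoprime m 3 ∧
      orbitSum S n ((S ^ i) x * y - x * y) = m) :
    (powerLattice D Y n).matrix ≤ cubeSpan ι (powerLattice D Y n) := by
  set R := powerLattice D Y n
  have h1 : (1 : M) ∈ R := by simpa using map_mem_powerLattice (D := D) (U := Y) hn 1
  have monomial_mem (i : ℕ) (z : O) : U ^ i * D z ∈ powSaturation p R :=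
    powerLattice_le_powSaturation_of_mul_mem
      (fun _ _ hx => mul_mem_powSaturation_powerLattice_of_dvd hDU hY hα hx)
      (pow_mul_mem_powerLattice_of_pow_eq hn hU i z)
  have map_mem (z : O) : D z ∈ powSaturation p R := by simpa using monomial_mem 0 z
  obtain ⟨j⟩ : Nonempty ι := inferInstance
  have coeffs_eq_top {i : ℕ} (hi : i < n) :
      monomialCoeffs (powSaturation p (cubeSpanCorner R j)) D U i = ⊤ := by
    refine monomialCoeffs_eq_top Nat.prime_three hn hSn hDU hU hσ hspan he htrace
      (fun i j z w => ?_) (fun i z => ?_) (fun z => ?_) hi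
    · refine mul_sub_mul_mem_powSaturation_cubeSpanCorner h1 (monomial_mem i z)
        (monomial_mem j w) ?_ ?_ ?_ <;>
      simp only [pow_mul_map_mul_pow_mul_map hDU] <;>
      exact monomial_mem _ _
    · exact three_zsmul_mem_powSaturation_cubeSpanCorner h1 (monomial_mem i z)
    · exact pow_three_mem_powSaturation_cubeSpanCorner (map_mem z)
  refine matrix_le_cubeSpan_of_le_powSaturation (i := j) h1 hp ?_
  refine (powerLattice_le_powSaturation_of_mul_mem
    fun _ _ hx => mul_mem_powSaturation_powerLattice hDU hY hx).trans
    (powSaturation_le_of_le (powerLattice_le fun i hi z => ?_))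
  exact mem_monomialCoeffs.1 (coeffs_eq_top hi ▸ AddSubgroup.mem_top z)

end Monomials

section TwistedShift

open Matrix

variable {F : Type*} [CommRing F] {n : ℕ} {σ : F}

/-- The matrix `U` of the canonical generation, over an arbitrary commutative ring: it maps each
standard basis vector to the next one, and the last one to `σ` times the first. -/
def twistedShift (n : ℕ) (σ : F) : Matrix (Fin n) (Fin n) F :=
  of fun i j => if (i : ℕ) = j + 1 then 1 else if (i : ℕ) = 0 ∧ (j : ℕ) = n - 1 then σ else 0

lemma twistedShift_mulVec_single {k : ℕ} (hk : k + 1 < n) :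
    twistedShift n σ *ᵥ Pi.single ⟨k, by omega⟩ 1 = Pi.single ⟨k + 1, hk⟩ 1 := by
  ext i
  simp only [mulVec_single_one, col_apply, twistedShift, of_apply, Pi.single_apply, Fin.ext_iff]
  split_ifs <;> first | rfl | omega

lemma twistedShift_mulVec_single_last (hn : 0 < n) :
    twistedShift n σ *ᵥ Pi.single ⟨n - 1, by omega⟩ 1 = σ • Pi.single ⟨0, hn⟩ 1 := by
  ext i
  simp only [mulVec_single_one, col_apply, twistedShift, of_apply, Pi.smul_apply, Pi.single_apply,
    Fin.ext_iff, smul_eq_mul, mul_ite, mul_one, mul_zero, and_true]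
  have := i.isLt
  split_ifs <;> first | rfl | omega

lemma twistedShift_pow_mulVec_single_zero {k : ℕ} (hk : k < n) :
    twistedShift n σ ^ k *ᵥ Pi.single ⟨0, by omega⟩ 1 = Pi.single ⟨k, hk⟩ 1 := by
  induction k with
  | zero => rw [pow_zero, one_mulVec]
  | succ k ih => rw [pow_succ', ← mulVec_mulVec, ih (by omega), twistedShift_mulVec_single hk]

lemma twistedShift_pow_self (n : ℕ) (σ : F) : twistedShift n σ ^ n = σ • 1 := by
  refine ext_of_mulVec_single fun k => ?_
  have hn : 0 < n := k.pos
  have on_first : twistedShift n σ ^ n *ᵥ Pi.single ⟨0, hn⟩ 1 = σ • Pi.single ⟨0, hn⟩ 1 := by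
    obtain ⟨m, rfl⟩ := Nat.exists_eq_succ_of_ne_zero hn.ne'
    rw [pow_succ', ← mulVec_mulVec, twistedShift_pow_mulVec_single_zero m.lt_succ_self]
    exact twistedShift_mulVec_single_last hn
  rw [← twistedShift_pow_mulVec_single_zero k.isLt, mulVec_mulVec, ← pow_add, add_comm, pow_add,
    ← mulVec_mulVec, on_first, mulVec_smul, smul_mulVec, one_mulVec]

lemma diagonal_mul_twistedShift {f : Fin n → F} {f' : Fin n → F} (hn : 0 < n)
    (hf : ∀ j (hj : j + 1 < n), f ⟨j + 1, hj⟩ = f' ⟨j, by omega⟩)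
    (hf0 : f ⟨0, hn⟩ = f' ⟨n - 1, by omega⟩) :
    diagonal f * twistedShift n σ = twistedShift n σ * diagonal f' := by
  ext i j
  rw [diagonal_mul, mul_diagonal, mul_comm, twistedShift, of_apply]
  split_ifs with h1 h2
  · have hi : i = ⟨j + 1, h1 ▸ i.isLt⟩ := Fin.ext h1
    rw [hi, hf j]
  · have hi : i = ⟨0, hn⟩ := Fin.ext h2.1
    have hj : j = ⟨n - 1, by omega⟩ := Fin.ext h2.2
    rw [hi, hj, hf0]
  · rw [zero_mul, zero_mul]

/-- The embedding `D` of the canonical generation, `z ↦ diag(z, S z, …, Sⁿ⁻¹ z)`. -/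
def conjDiagonal (S : F →+* F) (n : ℕ) : F →+* Matrix (Fin n) (Fin n) F :=
  (diagonalRingHom (Fin n) F).comp (RingHom.pi fun i : Fin n => S ^ (i : ℕ))

lemma conjDiagonal_mul_twistedShift {S : F →+* F} {z : F} (hz : (S ^ n) z = z) :
    conjDiagonal S n z * twistedShift n σ = twistedShift n σ * conjDiagonal S n (S z) := by
  obtain rfl | hn := n.eq_zero_or_pos
  · exact Subsingleton.elim _ _
  refine diagonal_mul_twistedShift hn (fun j hj => ?_) ?_
  · change (S ^ (j + 1)) z = (S ^ j) (S z)
    rw [pow_succ, RingHom.mul_def, RingHom.comp_apply]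
  · change z = (S ^ (n - 1)) (S z)
    rw [← RingHom.comp_apply, ← RingHom.mul_def, ← pow_succ, Nat.sub_add_cancel hn, hz]

end TwistedShift

section CharPeriods

open Finset

@[to_additive]
lemma prod_range_add_of_periodic {N : Type*} [CommMonoid N] {h : ℕ} {F : ℕ → N}
    (hF : Function.Periodic F h) (a : ℕ) :
    ∏ r ∈ range h, F (r + a) = ∏ r ∈ range h, F r := by
  induction a with
  | zero => rfl
  | succ a ih =>
    rw [← ih]
    obtain _ | h := h
    · rfl
    rw [prod_range_succ, prod_range_succ' fun r => F (r + a), zero_add,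
      show h + (a + 1) = a + (h + 1) by ring, hF a]
    simp only [add_right_comm, add_assoc]

lemma prod_range_mul_eq {N : Type*} [CommMonoid N] (F : ℕ → N) (n h : ℕ) :
    ∏ m ∈ range (n * h), F m = ∏ s ∈ range n, ∏ r ∈ range h, F (n * r + s) := by
  induction h with
  | zero => simp
  | succ h ih => simp only [mul_add_one, prod_range_add, ih, prod_range_succ, prod_mul_distrib]

variable {A R : Type*} [CommRing A] [CommRing R] {ψ : AddChar A R} {u : A} {h : ℕ}

/-- The sum of `ψ` over `x, u x, …, uʰ⁻¹ x`. For `u = gⁿ`, `x = gˢ` in `ZMod p` and the standard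
character this is the Gaussian period `η_s`. -/
def charPeriod (ψ : AddChar A R) (u : A) (h : ℕ) (x : A) : R :=
  ∑ r ∈ range h, ψ (u ^ r * x)

lemma periodic_pow_mul {B : Type*} (hu : u ^ h = 1) (F : A → B) (x : A) :
    Function.Periodic (fun r => F (u ^ r * x)) h := fun r => by
  simp only [pow_add, hu, mul_one]

lemma charPeriod_pow_mul (hu : u ^ h = 1) (r : ℕ) (x : A) :
    charPeriod ψ u h (u ^ r * x) = charPeriod ψ u h x := by
  simp only [charPeriod, ← mul_assoc, ← pow_add]
  exact sum_range_add_of_periodic (periodic_pow_mul hu ψ x) r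

lemma charPeriod_mul_charPeriod (hu : u ^ h = 1) (x y : A) :
    charPeriod ψ u h x * charPeriod ψ u h y = ∑ r ∈ range h, charPeriod ψ u h (u ^ r * x + y) := by
  calc charPeriod ψ u h x * charPeriod ψ u h y
      = ∑ t ∈ range h, charPeriod ψ u h (u ^ t * x) * ψ (u ^ t * y) := by
        simp only [charPeriod_pow_mul hu, ← mul_sum]
        rfl
    _ = ∑ t ∈ range h, ∑ r ∈ range h, ψ (u ^ t * (u ^ r * x + y)) := by
        simp only [charPeriod, sum_mul, ← AddChar.map_add_eq_mul, mul_add, mul_left_comm]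
    _ = ∑ r ∈ range h, charPeriod ψ u h (u ^ r * x + y) := sum_comm

/-- The ring homomorphism from the integral group ring of `A` that extends `ψ`. -/
def charEval (ψ : AddChar A R) : AddMonoidAlgebra ℤ A →+* R :=
  (AddMonoidAlgebra.lift ℤ R A ψ.toMonoidHom).toRingHom

lemma charEval_single_one (x : A) : charEval ψ (AddMonoidAlgebra.single x 1) = ψ x := by
  simp [charEval]

lemma charEval_eq_sum [Fintype A] (f : AddMonoidAlgebra ℤ A) :
    charEval ψ f = ∑ x, f.coeff x • ψ x := by
  have h : charEval ψ f = f.coeff.sum fun x c => c • ψ x := by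
    simp [charEval, AddMonoidAlgebra.lift_apply]
  rw [h, Finsupp.sum_fintype _ _ fun x => zero_smul ℤ (ψ x)]

/-- The endomorphism `[x] ↦ [u x]` of the integral group ring of `A`. -/
def dilation (u : A) : AddMonoidAlgebra ℤ A →+* AddMonoidAlgebra ℤ A :=
  AddMonoidAlgebra.mapDomainRingHom ℤ (AddMonoidHom.mulLeft u)

lemma dilation_single (x : A) (c : ℤ) :
    dilation u (AddMonoidAlgebra.single x c) = AddMonoidAlgebra.single (u * x) c := by
  simp [dilation]

lemma coeff_pow_mul_of_dilation_eq (hu : IsUnit u) {f : AddMonoidAlgebra ℤ A}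
    (hf : dilation u f = f) (r : ℕ) (x : A) : f.coeff (u ^ r * x) = f.coeff x := by
  have coeff_mul (x : A) : f.coeff (u * x) = f.coeff x := by
    conv_lhs => rw [← hf]
    simp only [dilation, AddMonoidAlgebra.mapDomainRingHom_apply, AddMonoidAlgebra.coeff_mapDomain]
    exact Finsupp.mapDomain_apply hu.mul_right_injective _ x
  induction r with
  | zero => rw [pow_zero, one_mul]
  | succ r ih => rw [pow_succ', mul_assoc, coeff_mul, ih]

/-- The values of `ψ` on the elements of the integral group ring that are invariant under dilation
by `u`. For `u = gⁿ` in `ZMod p` and the standard character this is the ring of integers of the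
subfield of degree `n` of `ℚ(ζ)`. -/
def charInvariants (ψ : AddChar A R) (u : A) : Subring R :=
  ((dilation u).eqLocus (RingHom.id _)).map (charEval ψ)

lemma charPeriod_mem_charInvariants (hu : u ^ h = 1) (x : A) :
    charPeriod ψ u h x ∈ charInvariants ψ u := by
  refine ⟨∑ r ∈ range h, AddMonoidAlgebra.single (u ^ r * x) 1, ?_, ?_⟩
  · change dilation u _ = RingHom.id _ _
    simp only [map_sum, dilation_single, ← mul_assoc, ← pow_succ', RingHom.id_apply]
    exact sum_range_add_of_periodic
      (periodic_pow_mul hu (fun y => AddMonoidAlgebra.single y (1 : ℤ)) x) 1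
  · simp only [map_sum, charEval_single_one, charPeriod]

lemma prod_one_sub_mem_charInvariants (hu : u ^ h = 1) (x : A) :
    ∏ r ∈ range h, (1 - ψ (u ^ r * x)) ∈ charInvariants ψ u := by
  refine ⟨∏ r ∈ range h, (1 - AddMonoidAlgebra.single (u ^ r * x) 1), ?_, ?_⟩
  · change dilation u _ = RingHom.id _ _
    simp only [map_prod, map_sub, map_one, dilation_single, ← mul_assoc, ← pow_succ',
      RingHom.id_apply]
    exact prod_range_add_of_periodic
      (periodic_pow_mul hu (fun y => 1 - AddMonoidAlgebra.single y (1 : ℤ)) x) 1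
  · simp only [map_prod, map_sub, map_one, charEval_single_one]

end CharPeriods

section FiniteField

open Finset

lemma pow_pow_mul_pow_eq_one_iff {G : Type*} [Monoid G] {g : G} {n h r i : ℕ}
    (hg : orderOf g = n * h) (hr : r < h) (hi : i < n) :
    (g ^ n) ^ r * g ^ i = 1 ↔ r = 0 ∧ i = 0 := by
  refine ⟨fun hri => ?_, by rintro ⟨rfl, rfl⟩; simp⟩
  rw [← pow_mul, ← pow_add, ← orderOf_dvd_iff_pow_eq_one, hg] at hri
  have hzero : n * r + i = 0 := Nat.eq_zero_of_dvd_of_lt hri (by nlinarith)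
  simpa [(Nat.zero_lt_of_lt hi).ne'] using hzero

variable {K : Type*} [Field K] [Fintype K] {g : K} {n h : ℕ}

lemma univ_erase_zero_eq_image_pow [DecidableEq K] (hg : orderOf g = Fintype.card K - 1) :
    univ.erase (0 : K) = (range (orderOf g)).image (g ^ ·) := by
  have hg0 : g ≠ 0 := by
    rintro rfl
    have := Fintype.one_lt_card (α := K)
    rw [orderOf_zero] at hg
    omega
  refine (eq_of_subset_of_card_le ?_ ?_).symm
  · intro x hx
    obtain ⟨m, -, rfl⟩ := mem_image.1 hx
    exact mem_erase.2 ⟨pow_ne_zero m hg0, mem_univ _⟩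
  · rw [card_erase_of_mem (mem_univ _), card_univ, ← hg, card_image_of_injOn, card_range]
    rw [coe_range]
    exact pow_injOn_Iio_orderOf

lemma exists_pow_eq_of_ne_zero (hg : orderOf g = Fintype.card K - 1) {x : K} (hx : x ≠ 0) :
    ∃ m, g ^ m = x := by
  classical
  have hx' : x ∈ univ.erase (0 : K) := mem_erase.2 ⟨hx, mem_univ x⟩
  rw [univ_erase_zero_eq_image_pow hg] at hx'
  obtain ⟨m, -, hm⟩ := mem_image.1 hx'
  exact ⟨m, hm⟩

lemma prod_univ_erase_zero [DecidableEq K] {N : Type*} [CommMonoid N]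
    (hcard : Fintype.card K = n * h + 1) (hg : orderOf g = n * h) (F : K → N) :
    ∏ x ∈ univ.erase 0, F x = ∏ s ∈ range n, ∏ r ∈ range h, F ((g ^ n) ^ r * g ^ s) := by
  have hg' : orderOf g = Fintype.card K - 1 := by rw [hcard, hg, Nat.add_sub_cancel]
  rw [univ_erase_zero_eq_image_pow hg', prod_image, hg, prod_range_mul_eq]
  · simp only [pow_add, pow_mul]
  · rw [coe_range]
    exact pow_injOn_Iio_orderOf

lemma sum_univ_erase_zero [DecidableEq K] {N : Type*} [AddCommMonoid N]
    (hcard : Fintype.card K = n * h + 1) (hg : orderOf g = n * h) (F : K → N) :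
    ∑ x ∈ univ.erase 0, F x = ∑ s ∈ range n, ∑ r ∈ range h, F ((g ^ n) ^ r * g ^ s) :=
  prod_univ_erase_zero (N := Multiplicative N) hcard hg F

variable {R : Type*} [CommRing R] [IsDomain R] {ψ : AddChar K R}

lemma sum_charPeriod_mul [DecidableEq K] (hψ : ψ.IsPrimitive) (hcard : Fintype.card K = n * h + 1)
    (hg : orderOf g = n * h) (b : K) :
    ∑ s ∈ range n, charPeriod ψ (g ^ n) h (g ^ s * b) =
      (if b = 0 then (Fintype.card K : R) else 0) - 1 := by
  have hsum := AddChar.sum_mulShift b hψ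
  rw [← add_sum_erase _ _ (mem_univ 0), sum_univ_erase_zero hcard hg, zero_mul,
    AddChar.map_zero_eq_one, Nat.cast_ite, Nat.cast_zero] at hsum
  simp only [charPeriod, ← mul_assoc, ← hsum, add_sub_cancel_left]

lemma sum_charPeriod (hψ : ψ.IsPrimitive) (hcard : Fintype.card K = n * h + 1)
    (hg : orderOf g = n * h) : ∑ s ∈ range n, charPeriod ψ (g ^ n) h (g ^ s) = -1 := by
  classical simpa using sum_charPeriod_mul hψ hcard hg 1

lemma sum_charPeriod_neg_mul_charPeriod (hψ : ψ.IsPrimitive)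
    (hcard : Fintype.card K = n * h + 1) (hg : orderOf g = n * h) {i : ℕ} (hi : i < n) :
    ∑ s ∈ range n, charPeriod ψ (g ^ n) h (g ^ s * -g ^ i) * charPeriod ψ (g ^ n) h (g ^ s) =
      (if i = 0 then (Fintype.card K : R) else 0) - h := by
  classical
  have hu : (g ^ n) ^ h = 1 := by rw [← pow_mul, ← hg, pow_orderOf_eq_one]
  have hh : 0 < h := by
    have := Fintype.one_lt_card (α := K)
    exact Nat.pos_of_mul_pos_left (a := n) (by omega)
  have expand (s : ℕ) :
      charPeriod ψ (g ^ n) h (g ^ s * -g ^ i) * charPeriod ψ (g ^ n) h (g ^ s) =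
        ∑ r ∈ range h, charPeriod ψ (g ^ n) h (g ^ s * (1 - (g ^ n) ^ r * g ^ i)) := by
    rw [charPeriod_mul_charPeriod hu]
    congr! 2
    ring
  have vanish {r : ℕ} (hr : r ∈ range h) :
      1 - (g ^ n) ^ r * g ^ i = 0 ↔ r = 0 ∧ i = 0 := by
    rw [sub_eq_zero, eq_comm, pow_pow_mul_pow_eq_one_iff hg (mem_range.1 hr) hi]
  calc _ = ∑ r ∈ range h, ((if r = 0 ∧ i = 0 then (Fintype.card K : R) else 0) - 1) := by
        simp only [expand]
        rw [sum_comm]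
        refine sum_congr rfl fun r hr => ?_
        simp only [sum_charPeriod_mul hψ hcard hg, vanish hr]
    _ = _ := by
        simp only [ite_and, sum_sub_distrib, sum_ite_eq', mem_range, hh, if_true, sum_const,
          card_range, nsmul_one]

lemma charInvariants_toAddSubgroup_eq (hψ : ψ.IsPrimitive) (hcard : Fintype.card K = n * h + 1)
    (hg : orderOf g = n * h) :
    (charInvariants ψ (g ^ n)).toAddSubgroup =
      AddSubgroup.closure (Set.range fun s : Fin n => charPeriod ψ (g ^ n) h (g ^ (s : ℕ))) := by
  classical
  set P := AddSubgroup.closure (Set.range fun s : Fin n => charPeriod ψ (g ^ n) h (g ^ (s : ℕ)))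
  have hu : (g ^ n) ^ h = 1 := by rw [← pow_mul, ← hg, pow_orderOf_eq_one]
  have hh : h ≠ 0 := by
    rintro rfl
    have := Fintype.one_lt_card (α := K)
    omega
  have period_mem {s : ℕ} (hs : s ∈ range n) : charPeriod ψ (g ^ n) h (g ^ s) ∈ P :=
    AddSubgroup.subset_closure ⟨⟨s, mem_range.1 hs⟩, rfl⟩
  have one_mem : (1 : R) ∈ P := by
    rw [← neg_neg 1, ← sum_charPeriod hψ hcard hg]
    exact neg_mem (sum_mem fun _ => period_mem)
  refine le_antisymm ?_ ((AddSubgroup.closure_le _).2 ?_)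
  · rintro _ ⟨f, hf, rfl⟩
    have hf' := coeff_pow_mul_of_dilation_eq (IsUnit.of_pow_eq_one hu hh) hf
    change charEval ψ f ∈ P
    rw [charEval_eq_sum, ← add_sum_erase _ _ (mem_univ 0), sum_univ_erase_zero hcard hg,
      AddChar.map_zero_eq_one]
    simp only [hf', ← smul_sum]
    exact add_mem (zsmul_mem one_mem _) (sum_mem fun s hs => zsmul_mem (period_mem hs) _)
  · rintro _ ⟨s, rfl⟩
    exact charPeriod_mem_charInvariants hu _

end FiniteField

section PeriodEmbedding

open Finset

lemma pow_eq_one_of_map_eq_charPeriod {A O R : Type*} [CommRing A] [CommRing O] [CommRing R]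
    {ψ : AddChar A R} {φ : O →+* R} {T : O →+* O} {e : O} {g : A} {n h : ℕ} (hu : (g ^ n) ^ h = 1)
    (hφ : Function.Injective φ) (he : ∀ s, φ ((T ^ s) e) = charPeriod ψ (g ^ n) h (g ^ s))
    (hspan : AddSubgroup.closure (Set.range fun s : Fin n => (T ^ (s : ℕ)) e) = ⊤) : T ^ n = 1 := by
  suffices heq : ((T ^ n : O →+* O) : O →+ O) = ((1 : O →+* O) : O →+ O) from
    RingHom.ext fun z => DFunLike.congr_fun heq z
  refine AddMonoidHom.eq_of_eqOn_dense hspan ?_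
  rintro _ ⟨s, rfl⟩
  change (T ^ n * T ^ (s : ℕ)) e = (T ^ (s : ℕ)) e
  apply hφ
  rw [← pow_add, he, he, pow_add]
  simpa only [pow_one] using charPeriod_pow_mul hu 1 (g ^ (s : ℕ))

variable {F O K R : Type*} [CommRing F] [CommRing O] [Field K] [Fintype K] [CommRing R] [IsDomain R]
  {ψ : AddChar K R} {S : F →+* F} {η : F} {g : K} {n h : ℕ}

lemma comap_charInvariants_eq_closure {φ : F →+* R} {f : Fin n → F} (hψ : ψ.IsPrimitive)
    (hcard : Fintype.card K = n * h + 1) (hg : orderOf g = n * h) (hφ : Function.Injective φ)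
    (hf : ∀ s : Fin n, φ (f s) = charPeriod ψ (g ^ n) h (g ^ (s : ℕ))) :
    ((charInvariants ψ (g ^ n)).comap φ).toAddSubgroup = AddSubgroup.closure (Set.range f) := by
  have image_eq : (Set.range fun s : Fin n => charPeriod ψ (g ^ n) h (g ^ (s : ℕ))) =
      (φ : F →+ R) '' Set.range f := by
    rw [← Set.range_comp]
    exact congrArg Set.range (funext fun s => (hf s).symm)
  change (charInvariants ψ (g ^ n)).toAddSubgroup.comap (φ : F →+ R) = _
  rw [charInvariants_toAddSubgroup_eq hψ hcard hg, image_eq, ← AddMonoidHom.map_closure,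
    AddSubgroup.comap_map_eq_self_of_injective hφ]

lemma charInvariants_le_range {φ : F →+* R} (hψ : ψ.IsPrimitive)
    (hcard : Fintype.card K = n * h + 1) (hg : orderOf g = n * h)
    (hη : ∀ s, φ ((S ^ s) η) = charPeriod ψ (g ^ n) h (g ^ s)) :
    charInvariants ψ (g ^ n) ≤ φ.range := by
  suffices (charInvariants ψ (g ^ n)).toAddSubgroup ≤ φ.range.toAddSubgroup from this
  rw [charInvariants_toAddSubgroup_eq hψ hcard hg, AddSubgroup.closure_le]
  rintro _ ⟨s, rfl⟩
  exact ⟨_, hη s⟩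

lemma map_mem_comap_charInvariants {φ : F →+* R} (hψ : ψ.IsPrimitive)
    (hcard : Fintype.card K = n * h + 1) (hg : orderOf g = n * h) (hφ : Function.Injective φ)
    (hη : ∀ s, φ ((S ^ s) η) = charPeriod ψ (g ^ n) h (g ^ s)) {z : F}
    (hz : z ∈ (charInvariants ψ (g ^ n)).comap φ) : S z ∈ (charInvariants ψ (g ^ n)).comap φ := by
  have hu : (g ^ n) ^ h = 1 := by rw [← pow_mul, ← hg, pow_orderOf_eq_one]
  suffices ((charInvariants ψ (g ^ n)).comap φ).toAddSubgroup ≤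
      ((charInvariants ψ (g ^ n)).comap φ).toAddSubgroup.comap (S : F →+ F) from this hz
  rw [comap_charInvariants_eq_closure hψ hcard hg hφ (f := fun s => (S ^ (s : ℕ)) η)
    fun s => hη s, AddSubgroup.closure_le, ← comap_charInvariants_eq_closure hψ hcard hg hφ
    (f := fun s => (S ^ (s : ℕ)) η) fun s => hη s]
  rintro _ ⟨s, rfl⟩
  change φ ((S * S ^ (s : ℕ)) η) ∈ charInvariants ψ (g ^ n)
  rw [← pow_succ', hη]
  exact charPeriod_mem_charInvariants hu _

variable {T : O →+* O} {e : O} {φ : O →+* R}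

lemma closure_range_eq_top {f : Fin n → O} (hψ : ψ.IsPrimitive)
    (hcard : Fintype.card K = n * h + 1) (hg : orderOf g = n * h) (hφ : Function.Injective φ)
    (hmem : ∀ z, φ z ∈ charInvariants ψ (g ^ n))
    (hf : ∀ s : Fin n, φ (f s) = charPeriod ψ (g ^ n) h (g ^ (s : ℕ))) :
    AddSubgroup.closure (Set.range f) = ⊤ := by
  rw [← comap_charInvariants_eq_closure hψ hcard hg hφ hf]
  exact (AddSubgroup.eq_top_iff' _).2 hmem

lemma orbitSum_eq_neg_one (hψ : ψ.IsPrimitive) (hcard : Fintype.card K = n * h + 1)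
    (hg : orderOf g = n * h) (hφ : Function.Injective φ)
    (he : ∀ s, φ ((T ^ s) e) = charPeriod ψ (g ^ n) h (g ^ s)) : orbitSum T n e = -1 := by
  apply hφ
  rw [orbitSum_apply, map_sum, map_neg, map_one, ← sum_charPeriod hψ hcard hg]
  exact sum_congr rfl fun s _ => he s

lemma exists_orbitSum_pow_map_mul_sub_eq (hψ : ψ.IsPrimitive)
    (hcard : Fintype.card K = n * h + 1) (hg : orderOf g = n * h) (hφ : Function.Injective φ)
    (he : ∀ s, φ ((T ^ s) e) = charPeriod ψ (g ^ n) h (g ^ s)) {i : ℕ} (hi0 : 0 < i) (hi : i < n) :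
    ∃ x y, orbitSum T n ((T ^ i) x * y - x * y) = -(Fintype.card K : O) := by
  obtain ⟨m, hm⟩ := exists_pow_eq_of_ne_zero (hg.trans (by rw [hcard, Nat.add_sub_cancel]))
    (neg_ne_zero.2 (one_ne_zero (α := K)))
  have trace_eq {j : ℕ} (hj : j < n) : φ (orbitSum T n ((T ^ j) ((T ^ m) e) * e)) =
      (if j = 0 then (Fintype.card K : R) else 0) - h := by
    rw [orbitSum_apply, map_sum, ← sum_charPeriod_neg_mul_charPeriod hψ hcard hg hj]
    refine sum_congr rfl fun s _ => ?_
    rw [map_mul, map_mul, he]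
    change φ ((T ^ s * (T ^ j * T ^ m)) e) * _ = _
    rw [← pow_add, ← pow_add, he, pow_add, pow_add, hm, mul_neg_one]
  refine ⟨(T ^ m) e, e, hφ ?_⟩
  have h0 := trace_eq (j := 0) (hi0.trans hi)
  rw [pow_zero, RingHom.one_def, RingHom.id_apply, if_pos rfl] at h0
  rw [map_sub, map_sub, trace_eq hi, h0, if_neg hi0.ne', map_neg, map_natCast]
  ring

end PeriodEmbedding

section StdAddChar

open Finset

lemma stdAddChar_natCast {p : ℕ} [NeZero p] (m : ℕ) :
    ZMod.stdAddChar (m : ZMod p) = zetaC p ^ m := by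
  rw [← Int.cast_natCast, ZMod.stdAddChar_coe, zetaC, ← Complex.exp_nat_mul]
  push_cast
  ring_nf

lemma gaussPeriod_eq_charPeriod {n p h g : ℕ} [NeZero p] (s : ℕ) :
    gaussPeriod n p h g s = charPeriod ZMod.stdAddChar ((g : ZMod p) ^ n) h ((g : ZMod p) ^ s) := by
  refine sum_congr rfl fun r _ => ?_
  rw [← stdAddChar_natCast, Nat.cast_pow, pow_add, pow_mul]

lemma prod_one_sub_stdAddChar (p : ℕ) [NeZero p] :
    ∏ x ∈ univ.erase (0 : ZMod p), (1 - ZMod.stdAddChar x) = p := by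
  obtain ⟨m, rfl⟩ := Nat.exists_eq_succ_of_ne_zero (NeZero.ne p)
  have hζ : IsPrimitiveRoot (zetaC (m + 1)) (m + 1) :=
    Complex.isPrimitiveRoot_exp _ m.succ_ne_zero
  have succ_eq (i : Fin m) : (i.succ : ZMod (m + 1)) = ((i + 1 : ℕ) : ZMod (m + 1)) := by
    exact (Fin.cast_val_eq_self i.succ).symm
  rw [Nat.cast_succ, ← hζ.prod_one_sub_pow_eq_order, ← Fin.prod_univ_eq_prod_range]
  change ∏ x ∈ (univ : Finset (Fin (m + 1))).erase 0, _ = _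
  rw [Fin.univ_succ, erase_cons, prod_map]
  refine prod_congr rfl fun i _ => ?_
  rw [← stdAddChar_natCast, ← succ_eq]
  rfl

end StdAddChar

section PeriodRing

open Finset

variable {F K R : Type*} [CommRing F] [Field K] [CommRing R] {φ : F →+* R} {ψ : AddChar K R}
  {S : F →+* F} {η : F} {g : K} {n h : ℕ}

/-- The elements of `F` that `φ` maps into `charInvariants ψ u`. For the inclusion of `Z` into `ℂ`,
`u = gⁿ` and the standard character of `ZMod p`, this is the ring of integers of `Z`. -/
def periodRing (φ : F →+* R) (ψ : AddChar K R) (u : K) : Subring F :=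
  (charInvariants ψ u).comap φ

lemma pow_map_mem_periodRing (hu : (g ^ n) ^ h = 1)
    (hη : ∀ s, φ ((S ^ s) η) = charPeriod ψ (g ^ n) h (g ^ s)) (s : ℕ) :
    (S ^ s) η ∈ periodRing φ ψ (g ^ n) := by
  change φ _ ∈ charInvariants ψ (g ^ n)
  rw [hη]
  exact charPeriod_mem_charInvariants hu _

variable [Fintype K] [IsDomain R]

lemma mem_powerLattice_conjDiagonal_iff {Y : Matrix (Fin n) (Fin n) F}
    (hψ : ψ.IsPrimitive) (hcard : Fintype.card K = n * h + 1) (hg : orderOf g = n * h)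
    (hφ : Function.Injective φ) (hη : ∀ s, φ ((S ^ s) η) = charPeriod ψ (g ^ n) h (g ^ s))
    {x : Matrix (Fin n) (Fin n) F} :
    x ∈ powerLattice ((conjDiagonal S n).comp (periodRing φ ψ (g ^ n)).subtype) Y n ↔
      ∃ c : Fin n → Fin n → ℤ,
        x = ∑ i, ∑ s, c i s • (Y ^ (i : ℕ) * conjDiagonal S n ((S ^ (s : ℕ)) η)) := by
  have hu : (g ^ n) ^ h = 1 := by rw [← pow_mul, ← hg, pow_orderOf_eq_one]
  let b (s : Fin n) : periodRing φ ψ (g ^ n) :=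
    ⟨(S ^ (s : ℕ)) η, pow_map_mem_periodRing hu hη s⟩
  have hspan : AddSubgroup.closure (Set.range b) = ⊤ :=
    closure_range_eq_top (φ := φ.comp (periodRing φ ψ (g ^ n)).subtype) hψ hcard hg
      (hφ.comp Subtype.val_injective) (fun z => z.2) fun s => hη s
  exact mem_powerLattice_iff_exists_sum hspan

theorem matrix_powerLattice_conjDiagonal_le_cubeSpan {ι : Type*} [Fintype ι] [DecidableEq ι]
    [Nontrivial ι] {Y : Matrix (Fin n) (Fin n) F} {σ lam : ℤ} {α : periodRing φ ψ (g ^ n)} {N : ℕ}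
    (hψ : ψ.IsPrimitive) (hcard : Fintype.card K = n * h + 1) (hg : orderOf g = n * h)
    (hφ : Function.Injective φ) (hη : ∀ s, φ ((S ^ s) η) = charPeriod ψ (g ^ n) h (g ^ s))
    (hσ : IsCoprime σ 3) (hK : IsCoprime 3 (Fintype.card K : ℤ))
    (hY : (Fintype.card K : ℤ) • Y =
      ((lam : Matrix (Fin n) (Fin n) F) - twistedShift n (σ : F)) * conjDiagonal S n α)
    (hα : α ∣ (Fintype.card K : periodRing φ ψ (g ^ n)) ^ N) :
    (powerLattice ((conjDiagonal S n).comp (periodRing φ ψ (g ^ n)).subtype) Y n).matrix ≤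
      cubeSpan ι (powerLattice ((conjDiagonal S n).comp (periodRing φ ψ (g ^ n)).subtype) Y n) := by
  let O := periodRing φ ψ (g ^ n)
  have hu : (g ^ n) ^ h = 1 := by rw [← pow_mul, ← hg, pow_orderOf_eq_one]
  have hn : 0 < n := by
    have := Fintype.one_lt_card (α := K)
    exact Nat.pos_of_mul_pos_right (b := h) (by omega)
  let T : O →+* O := S.restrict O O fun _ => map_mem_comap_charInvariants hψ hcard hg hφ hη
  let e : O := ⟨η, pow_map_mem_periodRing hu hη 0⟩
  have coe_pow (s : ℕ) (z : O) : ((T ^ s) z : F) = (S ^ s) z := by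
    simp only [RingHom.coe_pow]
    exact Function.Semiconj.iterate_right (f := O.subtype) (fun _ => rfl) s z
  have he (s : ℕ) : (φ.comp O.subtype) ((T ^ s) e) = charPeriod ψ (g ^ n) h (g ^ s) :=
    (congrArg φ (coe_pow s e)).trans (hη s)
  have hφO : Function.Injective (φ.comp O.subtype) := hφ.comp Subtype.val_injective
  have hspan := closure_range_eq_top hψ hcard hg hφO (fun z => z.2) fun s => he s
  have hTn : T ^ n = 1 := pow_eq_one_of_map_eq_charPeriod hu hφO he hspan
  refine matrix_powerLattice_le_cubeSpan (U := twistedShift n (σ : F)) (S := T) (e := e) (N := N)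
    hn hTn (fun z => conjDiagonal_mul_twistedShift ?_) ?_ hσ hK hY ?_ ?_
    (orbitSum_eq_neg_one hψ hcard hg hφO he) fun i hi0 hi => ?_
  · change (S ^ n) (z : F) = z
    rw [← coe_pow, hTn, RingHom.one_def, RingHom.id_apply]
  · rw [twistedShift_pow_self, Int.cast_smul_eq_zsmul, zsmul_eq_mul, mul_one]
  · exact_mod_cast hα
  · refine top_unique (hspan.ge.trans (AddSubgroup.closure_mono ?_))
    exact Set.range_subset_iff.2 fun s => ⟨s, rfl⟩
  · obtain ⟨x, y, hxy⟩ := exists_orbitSum_pow_map_mul_sub_eq hψ hcard hg hφO he hi0 hi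
    exact ⟨x, y, -Fintype.card K, hK.symm.neg_left, by push_cast; exact hxy⟩

lemma dvd_of_map_eq_prod_one_sub [DecidableEq K] {b c : periodRing φ ψ (g ^ n)}
    (hψ : ψ.IsPrimitive) (hcard : Fintype.card K = n * h + 1) (hg : orderOf g = n * h)
    (hφ : Function.Injective φ) (hη : ∀ s, φ ((S ^ s) η) = charPeriod ψ (g ^ n) h (g ^ s))
    (hb : φ b = ∏ r ∈ range h, (1 - ψ ((g ^ n) ^ r)))
    (hc : φ c = ∏ x ∈ univ.erase 0, (1 - ψ x)) : b ∣ c := by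
  have hu : (g ^ n) ^ h = 1 := by rw [← pow_mul, ← hg, pow_orderOf_eq_one]
  obtain ⟨m, rfl⟩ : ∃ m, n = m + 1 := by
    have := Fintype.one_lt_card (α := K)
    exact Nat.exists_eq_succ_of_ne_zero (by rintro rfl; omega)
  have cofactor_mem : ∏ s ∈ range m, ∏ r ∈ range h, (1 - ψ ((g ^ (m + 1)) ^ r * g ^ (s + 1))) ∈
      charInvariants ψ (g ^ (m + 1)) :=
    prod_mem fun s _ => prod_one_sub_mem_charInvariants hu (g ^ (s + 1))
  obtain ⟨z, hz⟩ := charInvariants_le_range hψ hcard hg hη cofactor_mem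
  refine ⟨⟨z, Subring.mem_comap.2 (hz ▸ cofactor_mem)⟩, Subtype.ext (hφ ?_)⟩
  rw [hc, prod_univ_erase_zero hcard hg, prod_range_succ', Subring.coe_mul, map_mul, hb, hz,
    mul_comm]
  simp only [pow_zero, mul_one]

end PeriodRing

section MaximalOrder

open Finset

variable {n p h g σ : ℕ} {lam : ℤ} {S : Zf n p h g ≃ₐ[ℚ] Zf n p h g} {β : Zf n p h g}

lemma coe_ringHom_pow_apply (s : ℕ) (z : Zf n p h g) :
    ((S : Zf n p h g →+* Zf n p h g) ^ s) z = (S ^ s) z := by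
  simp only [RingHom.coe_pow, AlgEquiv.coe_pow]
  rfl

lemma conjDiagonal_eq_Dm (z : Zf n p h g) :
    conjDiagonal (S : Zf n p h g →+* Zf n p h g) n z = Dm n p h g S z :=
  congrArg Matrix.diagonal (funext fun i : Fin n => coe_ringHom_pow_apply (i : ℕ) z)

lemma zsmul_Ym_eq (hp : p ≠ 0) :
    (p : ℤ) • Ym n p h g σ lam S β =
      ((lam : Matrix (Fin n) (Fin n) (Zf n p h g)) - twistedShift n (σ : Zf n p h g)) *
        conjDiagonal (S : Zf n p h g →+* Zf n p h g) n (β ^ (n - 1)) := by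
  rw [conjDiagonal_eq_Dm, Ym, natCast_zsmul, ← Nat.cast_smul_eq_nsmul (Zf n p h g),
    smul_inv_smul₀ (Nat.cast_ne_zero.2 hp), Int.cast_smul_eq_zsmul, zsmul_eq_mul, mul_one]
  rfl

lemma map_pow_etaZ_eq_charPeriod [NeZero p]
    (hS : ∀ s : ℕ, (((S ^ s) (etaZ n p h g) : Zf n p h g) : ℂ) = gaussPeriod n p h g s) (s : ℕ) :
    algebraMap (Zf n p h g) ℂ (((S : Zf n p h g →+* Zf n p h g) ^ s) (etaZ n p h g)) =
      charPeriod ZMod.stdAddChar ((g : ZMod p) ^ n) h ((g : ZMod p) ^ s) := by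
  rw [coe_ringHom_pow_apply, ← gaussPeriod_eq_charPeriod, ← hS]
  rfl

lemma map_eq_prod_one_sub_stdAddChar [NeZero p]
    (hβ : (β : ℂ) = ∏ r ∈ range h, (1 - zetaC p ^ (g ^ (n * r)))) :
    algebraMap (Zf n p h g) ℂ β =
      ∏ r ∈ range h, (1 - ZMod.stdAddChar (((g : ZMod p) ^ n) ^ r)) := by
  refine hβ.trans (prod_congr rfl fun r _ => ?_)
  rw [← stdAddChar_natCast, Nat.cast_pow, pow_mul]

lemma mem_Iorder_iff_mem_powerLattice [Fact p.Prime] (hph : p = n * h + 1)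
    (hg : orderOf (g : ZMod p) = n * h)
    (hS : ∀ s : ℕ, (((S ^ s) (etaZ n p h g) : Zf n p h g) : ℂ) = gaussPeriod n p h g s)
    {x : Matrix (Fin n) (Fin n) (Zf n p h g)} :
    x ∈ Iorder n p h g σ lam S β ↔
      x ∈ powerLattice ((conjDiagonal (S : Zf n p h g →+* Zf n p h g) n).comp
        (periodRing (algebraMap (Zf n p h g) ℂ) ZMod.stdAddChar ((g : ZMod p) ^ n)).subtype)
        (Ym n p h g σ lam S β) n := by
  rw [mem_powerLattice_conjDiagonal_iff (ZMod.isPrimitive_stdAddChar p) ((ZMod.card p).trans hph) hg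
    (algebraMap (Zf n p h g) ℂ).injective (map_pow_etaZ_eq_charPeriod hS)]
  simp only [conjDiagonal_eq_Dm, coe_ringHom_pow_apply]
  rfl

lemma exists_periodRing_coe_eq_and_dvd [Fact p.Prime] (hph : p = n * h + 1)
    (hg : orderOf (g : ZMod p) = n * h)
    (hS : ∀ s : ℕ, (((S ^ s) (etaZ n p h g) : Zf n p h g) : ℂ) = gaussPeriod n p h g s)
    (hβ : (β : ℂ) = ∏ r ∈ range h, (1 - zetaC p ^ (g ^ (n * r)))) :
    ∃ b : periodRing (algebraMap (Zf n p h g) ℂ) ZMod.stdAddChar ((g : ZMod p) ^ n),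
      (b : Zf n p h g) = β ∧ b ∣ p := by
  have hu : ((g : ZMod p) ^ n) ^ h = 1 := by rw [← pow_mul, ← hg, pow_orderOf_eq_one]
  have hβ' := map_eq_prod_one_sub_stdAddChar hβ
  have hmem : algebraMap (Zf n p h g) ℂ β ∈
      charInvariants ZMod.stdAddChar ((g : ZMod p) ^ n) := by
    simpa only [hβ', mul_one] using
      prod_one_sub_mem_charInvariants (ψ := ZMod.stdAddChar (N := p)) hu 1
  refine ⟨⟨β, hmem⟩, rfl, dvd_of_map_eq_prod_one_sub (ZMod.isPrimitive_stdAddChar p)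
    ((ZMod.card p).trans hph) hg (algebraMap (Zf n p h g) ℂ).injective
    (map_pow_etaZ_eq_charPeriod hS) hβ' ?_⟩
  rw [prod_one_sub_stdAddChar, Subring.coe_natCast, map_natCast]

theorem matrices_over_maximal_order_sum_of_cubes_general {ι : Type*} [Fintype ι] [DecidableEq ι]
    [Nontrivial ι] (hp : p.Prime) (hp3 : p ≠ 3) (hph : p = n * h + 1)
    (hg : orderOf (g : ZMod p) = p - 1)
    (hS : ∀ s : ℕ, (((S ^ s) (etaZ n p h g) : Zf n p h g) : ℂ) = gaussPeriod n p h g s)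
    (hβ : (β : ℂ) = ∏ r ∈ range h, (1 - zetaC p ^ (g ^ (n * r)))) (hσ3 : ¬ 3 ∣ σ)
    (C : Matrix ι ι (Matrix (Fin n) (Fin n) (Zf n p h g)))
    (hC : ∀ i j, C i j ∈ Iorder n p h g σ lam S β) :
    ∃ (m : ℕ) (A : Fin m → Matrix ι ι (Matrix (Fin n) (Fin n) (Zf n p h g))),
      (∀ t i j, A t i j ∈ Iorder n p h g σ lam S β) ∧ C = ∑ t, A t ^ 3 := by
  have : Fact p.Prime := ⟨hp⟩
  have hg' : orderOf (g : ZMod p) = n * h := by rw [hg, hph, Nat.add_sub_cancel]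
  have hσ : IsCoprime (σ : ℤ) 3 :=
    Nat.isCoprime_iff_coprime.2 (Nat.prime_three.coprime_iff_not_dvd.2 hσ3).symm
  have h3p : IsCoprime 3 (Fintype.card (ZMod p) : ℤ) := by
    rw [ZMod.card]
    exact Nat.isCoprime_iff_coprime.2 ((Nat.coprime_primes Nat.prime_three hp).2 hp3.symm)
  obtain ⟨b, rfl, hb⟩ := exists_periodRing_coe_eq_and_dvd hph hg' hS hβ
  have hle := matrix_powerLattice_conjDiagonal_le_cubeSpan (ι := ι) (α := b ^ (n - 1))
    (N := n - 1) (Y := Ym n p h g σ lam S b) (ZMod.isPrimitive_stdAddChar p)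
    ((ZMod.card p).trans hph) hg' (algebraMap (Zf n p h g) ℂ).injective
    (map_pow_etaZ_eq_charPeriod hS) hσ h3p
    (by simpa only [ZMod.card, Int.cast_natCast, SubmonoidClass.coe_pow] using
      zsmul_Ym_eq hp.ne_zero)
    (by simpa only [ZMod.card] using pow_dvd_pow_of_dvd hb (n - 1))
  obtain ⟨m, A, hA, rfl⟩ := exists_eq_sum_pow_three_of_mem_cubeSpan
    (hle fun i j => (mem_Iorder_iff_mem_powerLattice hph hg' hS).1 (hC i j))
  exact ⟨m, A, fun t i j => (mem_Iorder_iff_mem_powerLattice hph hg' hS).2 (hA t i j), rfl⟩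

end MaximalOrder

/-- If `3 ∤ σ` and `3 ∤ N_{Z/ℚ}(η)`, then for every `k ≥ 2` every `k × k`
matrix with entries in the maximal order `𝔪 = I(λ)` is a sum of cubes of `k × k`
matrices with entries in `𝔪`. -/
theorem matrices_over_maximal_order_sum_of_cubes
    (n p h g σ : ℕ) (lam : ℤ)
    (hn : n.Prime) (hnodd : Odd n)
    (hp : p.Prime)
    (hph : p = n * h + 1)
    (hg : orderOf (g : ZMod p) = p - 1)
    (hσfac : ∃ qs : Finset ℕ, 2 ≤ qs.card ∧
      (∀ q ∈ qs, q.Prime ∧ ¬ ∃ x : ZMod p, x ^ n = (q : ZMod p)) ∧ σ = ∏ q ∈ qs, q)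
    (hσres : ∃ x : ZMod p, x ^ n = (σ : ZMod p))
    (hσcop : Nat.Coprime σ p)
    (hlam : (lam : ZMod p) ^ n = (σ : ZMod p))
    (S : Zf n p h g ≃ₐ[ℚ] Zf n p h g)
    (hS : ∀ s : ℕ, (((S ^ s) (etaZ n p h g) : Zf n p h g) : ℂ) = gaussPeriod n p h g s)
    (β : Zf n p h g)
    (hβ : (β : ℂ) = ∏ r ∈ Finset.range h, (1 - zetaC p ^ (g ^ (n * r))))
    (hσ3 : ¬ (3 ∣ σ))
    (hnorm : ∃ N : ℤ, ¬ ((3 : ℤ) ∣ N) ∧ Algebra.norm ℚ (etaZ n p h g) = (N : ℚ))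
    (k : ℕ) (hk : 2 ≤ k)
    (C : Matrix (Fin k) (Fin k) (Matrix (Fin n) (Fin n) (Zf n p h g)))
    (hC : ∀ i j, C i j ∈ Iorder n p h g σ lam S β) :
    ∃ (m : ℕ) (A : Fin m → Matrix (Fin k) (Fin k) (Matrix (Fin n) (Fin n) (Zf n p h g))),
      (∀ t i j, A t i j ∈ Iorder n p h g σ lam S β) ∧ C = ∑ t, A t ^ 3 := by
  have hp3 : p ≠ 3 := by
    rintro rfl
    obtain rfl := (Nat.prime_dvd_prime_iff_eq hn Nat.prime_two).1 ⟨h, by omega⟩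
    exact absurd hnodd (by decide)
  have : Nontrivial (Fin k) := Fin.nontrivial_iff_two_le.2 hk
  exact matrices_over_maximal_order_sum_of_cubes_general hp hp3 hph hg hS hβ hσ3 C hC

end
end

section
/- The element β = ∏_{r=0}^{h−1}(1 − ζ^{g^{nr}}) lies in the ring of integers O_Z of Z, and its field norm satisfies N_{Z/ℚ}(β) = ∏_{s=0}^{n−1} S^s(β) = p. -/
set_option synthInstance.maxHeartbeats 1000000

noncomputable section

/-!
The periods `η_s = P(ζ^{g^s})` and the elements `β_s = Q(ζ^{g^s})` are values of fixed rational
polynomials `P`, `Q` at the conjugates `ζ^{g^s}` of `ζ`, and both depend only on `s` modulo `n`.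
Since the primitive `p`-th roots of unity are linearly independent over `ℚ`, the `n` periods, being
sums over disjoint nonempty sets of them, are distinct. So a conjugation of `ℚ(ζ)` that fixes `η`
also fixes `β`, whence `β ∈ ℚ(η)`, and the embeddings of `ℚ(η)` are `η ↦ η_s`, `β ↦ β_s` for
`s = 0, …, n - 1`. The norm of `β` is therefore the product of `1 - μ` over all primitive `p`-th
roots `μ`, which is `Φ_p(1) = p`.
-/

open Polynomial IntermediateField Finset

section ConjugateRoots

variable {F E : Type*} [Field F] [Field E] [Algebra F E] {α μ : E} {P Q : F[X]}

theorem aeval_eq_aeval_of_isConjRoot (hμ : IsConjRoot F α μ) (hPQ : aeval α P = aeval α Q) :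
    aeval μ P = aeval μ Q := by
  rw [← sub_eq_zero, ← map_sub] at hPQ ⊢
  exact aeval_eq_zero_of_dvd_aeval_eq_zero (minpoly.dvd F α hPQ) hμ.aeval_eq_zero

theorem isIntegral_aeval (hα : IsIntegral F α) (P : F[X]) : IsIntegral F (aeval α P) :=
  adjoin_le_integralClosure hα (aeval_mem_adjoin_singleton F α)

theorem aeval_mem_adjoin_simple (α : E) (P : F[X]) : aeval α P ∈ F⟮α⟯ :=
  algebra_adjoin_le_adjoin F {α} (aeval_mem_adjoin_singleton F α)

theorem isSeparable_aeval (hα : IsSeparable F α) (P : F[X]) : IsSeparable F (aeval α P) :=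
  have := (isSeparable_adjoin_simple_iff_isSeparable F E).2 hα
  isSeparable_of_mem_isSeparable F E (aeval_mem_adjoin_simple α P)

theorem isConjRoot_aeval_aeval (hα : IsIntegral F α) (hμ : IsConjRoot F α μ) (P : F[X]) :
    IsConjRoot F (aeval α P) (aeval μ P) := by
  refine isConjRoot_of_aeval_eq_zero (isIntegral_aeval hα P) ?_
  rw [← aeval_comp, aeval_eq_aeval_of_isConjRoot hμ (Q := 0), map_zero]
  rw [aeval_comp, minpoly.aeval, map_zero]

theorem exists_isConjRoot_and_aeval_eq [IsAlgClosed E] (hα : IsIntegral F α) {ν : E}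
    (hν : IsConjRoot F (aeval α P) ν) : ∃ μ, IsConjRoot F α μ ∧ aeval μ P = ν := by
  obtain ⟨φ, hφ⟩ := exists_algHom_adjoin_of_splits_of_aeval (K := E)
    (by rintro s rfl; exact ⟨hα, IsAlgClosed.splits _⟩) (aeval_mem_adjoin_simple α P)
    hν.aeval_eq_zero
  refine ⟨φ (AdjoinSimple.gen F α), isConjRoot_of_aeval_eq_zero hα ?_, ?_⟩
  · rw [aeval_algHom_apply, aeval_gen_minpoly, map_zero]
  · rw [aeval_algHom_apply, ← hφ]
    congr 1
    exact Subtype.ext (by simp)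

theorem aeval_mem_adjoin_simple_of_forall_isConjRoot [IsAlgClosed E] (hα : IsSeparable F α)
    (hPQ : ∀ μ, IsConjRoot F α μ → aeval μ P = aeval α P → aeval μ Q = aeval α Q) :
    aeval α Q ∈ F⟮aeval α P⟯ := by
  set L := F⟮aeval α P⟯
  have hαL : IsIntegral L α := hα.isIntegral.tower_top
  have hsep : IsSeparable L (aeval α Q) := (isSeparable_aeval hα Q).tower_top L
  by_contra hmem
  obtain ⟨ν, hne, hν⟩ := (notMem_iff_exists_ne_and_isConjRoot hsep (IsAlgClosed.splits _)).1
    (by simpa [Algebra.mem_bot] using hmem)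
  rw [← aeval_map_algebraMap L] at hν
  obtain ⟨μ, hμ, rfl⟩ := exists_isConjRoot_and_aeval_eq hαL hν
  rw [aeval_map_algebraMap] at hne
  refine hne (hPQ μ (hμ.of_isScalarTower hα.isIntegral) ?_).symm
  have hP := isConjRoot_aeval_aeval hαL hμ (P.map (algebraMap F L))
  rw [aeval_map_algebraMap, aeval_map_algebraMap] at hP
  exact IsConjRoot.eq_algebraMap (r := (⟨_, mem_adjoin_simple_self F _⟩ : L)) hP

variable {L : IntermediateField F E} {x y : L}

-- Writing `y = R(x)`, the polynomials `R ∘ P` and `Q` agree at `α`, hence at its conjugate `μ`.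
theorem algHom_apply_eq_aeval_of_isConjRoot (hL : L = F⟮aeval α P⟯) (hα : IsIntegral F α)
    (hμ : IsConjRoot F α μ) (hx : (x : E) = aeval α P) (hy : (y : E) = aeval α Q)
    {f : L →ₐ[F] E} (hf : f x = aeval μ P) : f y = aeval μ Q := by
  obtain ⟨R, hR⟩ : ∃ R : F[X], (y : E) = aeval (x : E) R := by
    have hmem : (y : E) ∈ F⟮(x : E)⟯ := hx ▸ hL.le y.2
    rw [← mem_toSubalgebra, adjoin_simple_toSubalgebra_of_isAlgebraic
      (hx ▸ isIntegral_aeval hα P).isAlgebraic, Algebra.adjoin_singleton_eq_range_aeval] at hmem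
    exact hmem.imp fun _ h ↦ h.symm
  have hyR : y = aeval x R := Subtype.ext (by simpa [← aeval_algebraMap_apply] using hR)
  rw [hyR, ← aeval_algHom_apply, hf, ← aeval_comp]
  exact aeval_eq_aeval_of_isConjRoot hμ (by rw [aeval_comp, ← hx, ← hR, hy])

theorem coe_pow_apply_eq_aeval_pow_pow (hL : L = F⟮aeval α P⟯) (hα : IsIntegral F α) {g : ℕ}
    (hg : IsConjRoot F α (α ^ g)) {σ : L ≃ₐ[F] L} (hx : (x : E) = aeval α P)
    (hσ : (σ x : E) = aeval (α ^ g) P) (hy : (y : E) = aeval α Q) (s : ℕ) :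
    ((σ ^ s) y : E) = aeval (α ^ g ^ s) Q := by
  induction s with
  | zero => simpa using hy
  | succ s ih =>
    have hQs : ∀ z : E, aeval z (Q.comp (X ^ g ^ s)) = aeval (z ^ g ^ s) Q := by simp [aeval_comp]
    rw [← hQs] at ih
    rw [pow_succ', pow_succ', pow_mul, ← hQs]
    exact algHom_apply_eq_aeval_of_isConjRoot (f := L.val.comp σ) hL hα hg hx ih hσ

theorem exists_algHom_gen_eq_aeval (hα : IsIntegral F α) (hμ : IsConjRoot F α μ) (P : F[X]) :
    ∃ φ : F⟮aeval α P⟯ →ₐ[F] E, φ (AdjoinSimple.gen F (aeval α P)) = aeval μ P := by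
  have hPα := isIntegral_aeval hα P
  exact ⟨_, algHomAdjoinIntegralEquiv_symm_apply_gen F hPα ⟨aeval μ P,
    (isConjRoot_iff_mem_minpoly_aroots hPα).1 (isConjRoot_aeval_aeval hα hμ P)⟩⟩

theorem exists_isConjRoot_and_algHom_gen_eq_aeval [IsAlgClosed E] (hα : IsIntegral F α)
    (f : F⟮aeval α P⟯ →ₐ[F] E) :
    ∃ μ, IsConjRoot F α μ ∧ aeval μ P = f (AdjoinSimple.gen F (aeval α P)) := by
  refine exists_isConjRoot_and_aeval_eq hα
    (isConjRoot_of_aeval_eq_zero (isIntegral_aeval hα P) ?_)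
  rw [aeval_algHom_apply, aeval_gen_minpoly, map_zero]

theorem algebraMap_norm_eq_prod_aeval [IsAlgClosed E] (hL : L = F⟮aeval α P⟯)
    (hα : IsSeparable F α) (hy : (y : E) = aeval α Q) {ι : Type*} {s : Finset ι} {μ : ι → E}
    (hμ : ∀ i ∈ s, IsConjRoot F α (μ i)) (hinj : Set.InjOn (fun i ↦ aeval (μ i) P) s)
    (hsurj : ∀ ν, IsConjRoot F α ν → ∃ i ∈ s, aeval (μ i) P = aeval ν P) :
    algebraMap F E (Algebra.norm F y) = ∏ i ∈ s, aeval (μ i) Q := by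
  subst hL
  have hPα := isSeparable_aeval hα P
  have := (isSeparable_adjoin_simple_iff_isSeparable F E).2 hPα
  have := adjoin.finiteDimensional hPα.isIntegral
  have : Nonempty (F⟮aeval α P⟯ →ₐ[F] E) := ⟨val _⟩
  choose! φ hφ using fun i hi ↦ exists_algHom_gen_eq_aeval hα.isIntegral (hμ i hi) P
  rw [Algebra.norm_eq_prod_embeddings F E y]
  refine (prod_nbij φ (fun _ _ ↦ mem_univ _) (fun i hi j hj hij ↦ ?_) (fun f _ ↦ ?_)
    fun i hi ↦ ?_).symm
  · exact hinj hi hj (by simp only [← hφ i hi, ← hφ j hj, hij])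
  · obtain ⟨ν, hν, hνf⟩ := exists_isConjRoot_and_algHom_gen_eq_aeval hα.isIntegral f
    obtain ⟨i, hi, hiν⟩ := hsurj ν hν
    refine ⟨i, hi, adjoin_algHom_ext F ?_⟩
    rintro _ rfl
    exact (hφ i hi).trans (hiν.trans hνf)
  · exact (algHom_apply_eq_aeval_of_isConjRoot rfl hα.isIntegral (hμ i hi) rfl hy (hφ i hi)).symm

end ConjugateRoots

section BlockProducts

variable {M : Type*} [CommMonoid M] {n h : ℕ}

theorem prod_range_prod_range_mul_add (f : ℕ → M) (n h : ℕ) :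
    ∏ s ∈ range n, ∏ r ∈ range h, f (n * r + s) = ∏ k ∈ range (n * h), f k := by
  rw [prod_comm]
  induction h with
  | zero => simp
  | succ h ih => rw [prod_range_succ, ih, Nat.mul_succ, prod_range_add]

@[to_additive periodic_sum_range_mul_add]
theorem periodic_prod_range_mul_add {f : ℕ → M} (hf : Function.Periodic f (n * h)) :
    Function.Periodic (fun s ↦ ∏ r ∈ range h, f (n * r + s)) n := fun s ↦ by
  have hshift (r : ℕ) : f (n * r + (s + n)) = f (n * (r + 1) + s) := by congr 1; ring
  have hend : f (n * h + s) = f (n * 0 + s) := by rw [add_comm, hf, mul_zero, zero_add]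
  simp only [hshift]
  cases h with
  | zero => simp
  | succ h => rw [prod_range_succ, hend, ← prod_range_succ' (fun r ↦ f (n * r + s))]

end BlockProducts

theorem injOn_sum_of_linearIndepOn {ι R M : Type*} [Semiring R] [Nontrivial R] [AddCommMonoid M]
    [Module R M] {v : ι → M} {s : Finset ι} (hv : LinearIndepOn R v (s : Set ι)) :
    Set.InjOn (fun t ↦ ∑ i ∈ t, v i) {t | t ⊆ s} := by
  classical
  have hsum {t : Finset ι} (ht : t ⊆ s) :
      ∑ i ∈ t, v i = ∑ i ∈ s, (if i ∈ t then (1 : R) else 0) • v i := by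
    simp [ite_smul, sum_ite_mem, inter_eq_right.2 ht]
  intro t ht u hu htu
  have hcoeff := linearIndepOn_finset_iffₛ.1 hv _ _ ((hsum ht).symm.trans (htu.trans (hsum hu)))
  ext i
  by_cases hi : i ∈ s
  · have := hcoeff i hi
    by_cases i ∈ t <;> by_cases i ∈ u <;> simp_all
  · exact iff_of_false (fun h ↦ hi (ht h)) (fun h ↦ hi (hu h))

section PrimitiveRoots

variable {E : Type*} [Field E] {p g : ℕ} {ζ : E}

theorem isOfFinOrder_of_orderOf_eq_sub_one (hp : p.Prime) (hg : orderOf (g : ZMod p) = p - 1) :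
    IsOfFinOrder (g : ZMod p) :=
  orderOf_pos_iff.1 (hg ▸ Nat.sub_pos_of_lt hp.one_lt)

theorem pow_pow_eq_pow_pow_iff (hp : p.Prime) (hζ : IsPrimitiveRoot ζ p)
    (hg : orderOf (g : ZMod p) = p - 1) {a b : ℕ} :
    ζ ^ g ^ a = ζ ^ g ^ b ↔ a ≡ b [MOD p - 1] := by
  have hfin := isOfFinOrder_of_orderOf_eq_sub_one hp hg
  have hζfin : IsOfFinOrder ζ := orderOf_pos_iff.1 (hζ.eq_orderOf ▸ hp.pos)
  rw [hζfin.pow_eq_pow_iff_modEq, ← hζ.eq_orderOf, ← hg, ← hfin.pow_eq_pow_iff_modEq,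
    ← ZMod.natCast_eq_natCast_iff, Nat.cast_pow, Nat.cast_pow]

theorem isPrimitiveRoot_pow_pow (hp : p.Prime) (hζ : IsPrimitiveRoot ζ p)
    (hg : orderOf (g : ZMod p) = p - 1) (k : ℕ) : IsPrimitiveRoot (ζ ^ g ^ k) p := by
  have hfin := isOfFinOrder_of_orderOf_eq_sub_one hp hg
  exact hζ.pow_of_coprime _ (((ZMod.isUnit_iff_coprime g p).1 hfin.isUnit).pow_left k)

theorem periodic_pow_pow (hp : p.Prime) (hζ : IsPrimitiveRoot ζ p)
    (hg : orderOf (g : ZMod p) = p - 1) : Function.Periodic (fun k ↦ ζ ^ g ^ k) (p - 1) :=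
  fun _ ↦ (pow_pow_eq_pow_pow_iff hp hζ hg).2 Nat.add_modEq_right

theorem injOn_pow_pow (hp : p.Prime) (hζ : IsPrimitiveRoot ζ p)
    (hg : orderOf (g : ZMod p) = p - 1) :
    Set.InjOn (fun k ↦ ζ ^ g ^ k) (range (p - 1)) := fun _ ha _ hb hab ↦
  ((pow_pow_eq_pow_pow_iff hp hζ hg).1 hab).eq_of_lt_of_lt (mem_range.1 ha) (mem_range.1 hb)

open Classical in
theorem image_pow_pow_eq_primitiveRoots (hp : p.Prime) (hζ : IsPrimitiveRoot ζ p)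
    (hg : orderOf (g : ZMod p) = p - 1) :
    (range (p - 1)).image (fun k ↦ ζ ^ g ^ k) = primitiveRoots p E := by
  refine eq_of_subset_of_card_le (image_subset_iff.2 fun k _ ↦ ?_) ?_
  · exact (mem_primitiveRoots hp.pos).2 (isPrimitiveRoot_pow_pow hp hζ hg k)
  · rw [card_image_of_injOn (injOn_pow_pow hp hζ hg), card_range, hζ.card_primitiveRoots,
      Nat.totient_prime hp]

theorem prod_one_sub_pow_pow_eq_prime (hp : p.Prime) (hζ : IsPrimitiveRoot ζ p)
    (hg : orderOf (g : ZMod p) = p - 1) : ∏ k ∈ range (p - 1), (1 - ζ ^ g ^ k) = p := by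
  classical
  have : Fact p.Prime := ⟨hp⟩
  rw [← prod_image (f := fun μ ↦ 1 - μ) (injOn_pow_pow hp hζ hg),
    image_pow_pow_eq_primitiveRoots hp hζ hg, ← eval_one_cyclotomic_prime (R := E),
    cyclotomic_eq_prod_X_sub_primitiveRoots hζ, eval_prod]
  simp

variable [CharZero E]

theorem isSeparable_rat_of_isPrimitiveRoot {m : ℕ} (hm : 0 < m) (hζ : IsPrimitiveRoot ζ m) :
    IsSeparable ℚ ζ :=
  (minpoly.irreducible (hζ.isIntegral hm).tower_top).separable

theorem isConjRoot_rat_iff_isPrimitiveRoot {m : ℕ} (hm : 0 < m) (hζ : IsPrimitiveRoot ζ m)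
    {μ : E} : IsConjRoot ℚ ζ μ ↔ IsPrimitiveRoot μ m := by
  have : NeZero (m : E) := ⟨Nat.cast_ne_zero.2 hm.ne'⟩
  rw [isConjRoot_iff_aeval_eq_zero (isSeparable_rat_of_isPrimitiveRoot hm hζ).isIntegral,
    ← cyclotomic_eq_minpoly_rat hζ hm, aeval_def, ← eval_map, map_cyclotomic,
    ← isRoot_cyclotomic_iff, IsRoot.def]

theorem isConjRoot_rat_iff_exists_pow_pow (hp : p.Prime) (hζ : IsPrimitiveRoot ζ p)
    (hg : orderOf (g : ZMod p) = p - 1) {μ : E} : IsConjRoot ℚ ζ μ ↔ ∃ k, ζ ^ g ^ k = μ := by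
  classical
  rw [isConjRoot_rat_iff_isPrimitiveRoot hp.pos hζ]
  refine ⟨fun hμ ↦ ?_, ?_⟩
  · rw [← mem_primitiveRoots hp.pos, ← image_pow_pow_eq_primitiveRoots hp hζ hg, mem_image] at hμ
    exact hμ.imp fun _ h ↦ h.2
  · rintro ⟨k, rfl⟩
    exact isPrimitiveRoot_pow_pow hp hζ hg k

-- The primitive `p`-th roots are `ζ` times the power basis `1, ζ, …, ζ ^ (p - 2)` of `ℚ(ζ)`.
theorem linearIndepOn_primitiveRoots (hp : p.Prime) (hζ : IsPrimitiveRoot ζ p) :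
    LinearIndepOn ℚ id (primitiveRoots p E : Set E) := by
  have hdeg : (minpoly ℚ ζ).natDegree = p - 1 := by
    rw [← cyclotomic_eq_minpoly_rat hζ hp.pos, natDegree_cyclotomic, Nat.totient_prime hp]
  have hker : LinearMap.ker (LinearMap.mulLeft ℚ ζ) = ⊥ :=
    LinearMap.ker_eq_bot.2 (mul_right_injective₀ (hζ.ne_zero hp.ne_zero))
  refine ((linearIndependent_pow ζ).map' _ hker).linearIndepOn_id.mono fun μ hμ ↦ ?_
  have : NeZero p := ⟨hp.ne_zero⟩
  replace hμ := (mem_primitiveRoots hp.pos).1 hμ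
  obtain ⟨i, hi, rfl⟩ := hζ.eq_pow_of_pow_eq_one hμ.pow_eq_one
  have hi0 : i ≠ 0 := by
    rintro rfl
    exact hμ.ne_one hp.one_lt (pow_zero ζ)
  refine ⟨⟨i - 1, by omega⟩, ?_⟩
  simp [← pow_succ', Nat.sub_add_cancel (Nat.pos_of_ne_zero hi0)]

theorem linearIndepOn_pow_pow (hp : p.Prime) (hζ : IsPrimitiveRoot ζ p)
    (hg : orderOf (g : ZMod p) = p - 1) :
    LinearIndepOn ℚ (fun k ↦ ζ ^ g ^ k) (range (p - 1) : Set ℕ) := by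
  classical
  rw [LinearIndepOn_iff_linearIndepOn_image_injOn, ← coe_image,
    image_pow_pow_eq_primitiveRoots hp hζ hg]
  exact ⟨linearIndepOn_primitiveRoots hp hζ, injOn_pow_pow hp hζ hg⟩

end PrimitiveRoots

section GaussPeriods

/-- The polynomial `P` such that the Gaussian period `η_s` is `P(ζ^{g^s})`. -/
def gaussPeriodPoly (n h g : ℕ) : ℚ[X] := ∑ r ∈ range h, X ^ g ^ (n * r)

/-- The polynomial `Q` such that the conjugate `S^s(β)` of `β` is `Q(ζ^{g^s})`. -/
def betaPoly (n h g : ℕ) : ℚ[X] := ∏ r ∈ range h, (1 - X ^ g ^ (n * r))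

variable {E : Type*} [Field E] {n p h g : ℕ} {ζ : E}

theorem pos_and_pos_of_prime_mul_add_one (hp : (n * h + 1).Prime) : 0 < n ∧ 0 < h := by
  have := hp.one_lt
  exact CanonicallyOrderedAdd.mul_pos.1 (by omega)

theorem periodic_pow_pow_mul (hp : p.Prime) (hζ : IsPrimitiveRoot ζ p) (hph : p = n * h + 1)
    (hg : orderOf (g : ZMod p) = p - 1) : Function.Periodic (fun k ↦ ζ ^ g ^ k) (n * h) := by
  have hnh : p - 1 = n * h := by omega
  exact hnh ▸ periodic_pow_pow hp hζ hg

variable [CharZero E]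

theorem aeval_gaussPeriodPoly (n h g s : ℕ) (ζ : E) :
    aeval (ζ ^ g ^ s) (gaussPeriodPoly n h g) = ∑ r ∈ range h, ζ ^ g ^ (n * r + s) := by
  simp [gaussPeriodPoly, ← pow_mul, ← pow_add, add_comm s]

theorem aeval_betaPoly (n h g s : ℕ) (ζ : E) :
    aeval (ζ ^ g ^ s) (betaPoly n h g) = ∏ r ∈ range h, (1 - ζ ^ g ^ (n * r + s)) := by
  simp [betaPoly, map_prod, ← pow_mul, ← pow_add, add_comm s]

theorem periodic_aeval_gaussPeriodPoly (hp : p.Prime) (hζ : IsPrimitiveRoot ζ p)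
    (hph : p = n * h + 1) (hg : orderOf (g : ZMod p) = p - 1) :
    Function.Periodic (fun s ↦ aeval (ζ ^ g ^ s) (gaussPeriodPoly n h g)) n := by
  simp only [aeval_gaussPeriodPoly]
  exact periodic_sum_range_mul_add (periodic_pow_pow_mul hp hζ hph hg)

theorem periodic_aeval_betaPoly (hp : p.Prime) (hζ : IsPrimitiveRoot ζ p)
    (hph : p = n * h + 1) (hg : orderOf (g : ZMod p) = p - 1) :
    Function.Periodic (fun s ↦ aeval (ζ ^ g ^ s) (betaPoly n h g)) n := by
  simp only [aeval_betaPoly]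
  exact periodic_prod_range_mul_add ((periodic_pow_pow_mul hp hζ hph hg).comp (1 - ·))

theorem injOn_aeval_gaussPeriodPoly (hp : p.Prime) (hζ : IsPrimitiveRoot ζ p)
    (hph : p = n * h + 1) (hg : orderOf (g : ZMod p) = p - 1) :
    Set.InjOn (fun s ↦ aeval (ζ ^ g ^ s) (gaussPeriodPoly n h g)) (range n) := by
  obtain ⟨hn, hh⟩ := pos_and_pos_of_prime_mul_add_one (hph ▸ hp)
  have hsum (s : ℕ) : aeval (ζ ^ g ^ s) (gaussPeriodPoly n h g) =
      ∑ k ∈ (range h).image (n * · + s), ζ ^ g ^ k := by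
    rw [aeval_gaussPeriodPoly, sum_image]
    simp [hn.ne']
  have hsub {s : ℕ} (hs : s ∈ range n) : (range h).image (n * · + s) ⊆ range (p - 1) := by
    simp only [image_subset_iff, mem_range, hph, Nat.add_sub_cancel] at hs ⊢
    intro r hr
    nlinarith
  intro a ha b hb hab
  simp only [hsum] at hab
  have himage := injOn_sum_of_linearIndepOn (linearIndepOn_pow_pow hp hζ hg) (hsub ha) (hsub hb) hab
  obtain ⟨r, -, hr⟩ : ∃ r ∈ range h, n * r + b = a := by
    rw [← mem_image, ← himage, mem_image]
    exact ⟨0, mem_range.2 hh, by simp⟩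
  have hmod : a ≡ b [MOD n] := by simp [← hr, Nat.ModEq]
  exact hmod.eq_of_lt_of_lt (mem_range.1 ha) (mem_range.1 hb)

theorem prod_aeval_betaPoly (hp : p.Prime) (hζ : IsPrimitiveRoot ζ p) (hph : p = n * h + 1)
    (hg : orderOf (g : ZMod p) = p - 1) :
    ∏ s ∈ range n, aeval (ζ ^ g ^ s) (betaPoly n h g) = p := by
  simp only [aeval_betaPoly]
  rw [prod_range_prod_range_mul_add (fun k ↦ 1 - ζ ^ g ^ k),
    ← prod_one_sub_pow_pow_eq_prime hp hζ hg]
  simp [hph]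

variable [IsAlgClosed E]

theorem aeval_betaPoly_mem_adjoin (hp : p.Prime) (hζ : IsPrimitiveRoot ζ p)
    (hph : p = n * h + 1) (hg : orderOf (g : ZMod p) = p - 1) :
    aeval ζ (betaPoly n h g) ∈ ℚ⟮aeval ζ (gaussPeriodPoly n h g)⟯ := by
  have hn : 0 < n := (pos_and_pos_of_prime_mul_add_one (hph ▸ hp)).1
  refine aeval_mem_adjoin_simple_of_forall_isConjRoot (isSeparable_rat_of_isPrimitiveRoot hp.pos hζ)
    fun μ hμ hμη ↦ ?_
  obtain ⟨k, rfl⟩ := (isConjRoot_rat_iff_exists_pow_pow hp hζ hg).1 hμ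
  have hk : k % n = 0 := injOn_aeval_gaussPeriodPoly hp hζ hph hg
    (mem_range.2 (Nat.mod_lt k hn)) (mem_range.2 hn) <| by
      simpa [(periodic_aeval_gaussPeriodPoly hp hζ hph hg).map_mod_nat] using hμη
  simpa [hk] using ((periodic_aeval_betaPoly hp hζ hph hg).map_mod_nat k).symm

theorem norm_eq_prime_of_eq_aeval_betaPoly (hp : p.Prime) (hζ : IsPrimitiveRoot ζ p)
    (hph : p = n * h + 1) (hg : orderOf (g : ZMod p) = p - 1) {L : IntermediateField ℚ E}
    (hL : L = ℚ⟮aeval ζ (gaussPeriodPoly n h g)⟯) {β : L}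
    (hβ : (β : E) = aeval ζ (betaPoly n h g)) : Algebra.norm ℚ β = p := by
  have hn : 0 < n := (pos_and_pos_of_prime_mul_add_one (hph ▸ hp)).1
  have hconj {μ : E} := isConjRoot_rat_iff_exists_pow_pow (μ := μ) hp hζ hg
  apply (algebraMap ℚ E).injective
  rw [map_natCast, ← prod_aeval_betaPoly hp hζ hph hg]
  refine algebraMap_norm_eq_prod_aeval hL (isSeparable_rat_of_isPrimitiveRoot hp.pos hζ) hβ
    (fun s _ ↦ hconj.2 ⟨s, rfl⟩) (injOn_aeval_gaussPeriodPoly hp hζ hph hg) fun ν hν ↦ ?_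
  obtain ⟨k, rfl⟩ := hconj.1 hν
  exact ⟨k % n, mem_range.2 (Nat.mod_lt k hn),
    (periodic_aeval_gaussPeriodPoly hp hζ hph hg).map_mod_nat k⟩

end GaussPeriods

theorem gaussPeriod_eq_aeval (n p h g s : ℕ) :
    gaussPeriod n p h g s = aeval (zetaC p ^ g ^ s) (gaussPeriodPoly n h g) :=
  (aeval_gaussPeriodPoly n h g s (zetaC p)).symm

theorem beta_integral_and_norm_eq_p_general
    (n p h g : ℕ)
    (hp : p.Prime)
    (hph : p = n * h + 1)
    (hg : orderOf (g : ZMod p) = p - 1)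
    (S : Zf n p h g ≃ₐ[ℚ] Zf n p h g)
    (hS : (S (etaZ n p h g) : ℂ) = gaussPeriod n p h g 1) :
    ∃ β : Zf n p h g,
      (β : ℂ) = (∏ r ∈ Finset.range h, (1 - zetaC p ^ (g ^ (n * r)))) ∧
      IsIntegral ℤ β ∧
      Algebra.norm ℚ β = (p : ℚ) ∧
      ∏ s ∈ Finset.range n, (S ^ s) β = (p : Zf n p h g) := by
  have hζ : IsPrimitiveRoot (zetaC p) p := Complex.isPrimitiveRoot_exp p hp.ne_zero
  have hζint : IsIntegral ℤ (zetaC p) := hζ.isIntegral hp.pos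
  have hη : gaussPeriod n p h g 0 = aeval (zetaC p) (gaussPeriodPoly n h g) := by
    rw [gaussPeriod_eq_aeval, pow_zero, pow_one]
  have hZ : Zf n p h g = ℚ⟮aeval (zetaC p) (gaussPeriodPoly n h g)⟯ := by rw [Zf, hη]
  rw [gaussPeriod_eq_aeval, pow_one] at hS
  have hconj : IsConjRoot ℚ (zetaC p) (zetaC p ^ g) :=
    (isConjRoot_rat_iff_exists_pow_pow hp hζ hg).2 ⟨1, by rw [pow_one]⟩
  let β : Zf n p h g :=
    ⟨aeval (zetaC p) (betaPoly n h g), hZ ▸ aeval_betaPoly_mem_adjoin hp hζ hph hg⟩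
  have hβ : (β : ℂ) = ∏ r ∈ range h, (1 - zetaC p ^ g ^ (n * r)) := by
    simpa using aeval_betaPoly n h g 0 (zetaC p)
  refine ⟨β, hβ, ?_, norm_eq_prime_of_eq_aeval_betaPoly hp hζ hph hg hZ rfl, ?_⟩
  · rw [← isIntegral_algebraMap_iff (algebraMap (Zf n p h g) ℂ).injective]
    change IsIntegral ℤ (β : ℂ)
    exact hβ ▸ IsIntegral.prod _ fun r _ ↦ isIntegral_one.sub (hζint.pow _)
  · apply (algebraMap (Zf n p h g) ℂ).injective
    rw [map_prod, map_natCast, ← prod_aeval_betaPoly hp hζ hph hg]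
    exact prod_congr rfl fun s _ ↦
      coe_pow_apply_eq_aeval_pow_pow hZ hζint.tower_top hconj hη hS rfl s

/-- `β = ∏_{r=0}^{h-1}(1 − ζ^{g^{nr}})` lies in the ring of integers
`O_Z` of `Z`, and its field norm satisfies `N_{Z/ℚ}(β) = ∏_{s=0}^{n-1} S^s(β) = p`. -/
theorem beta_integral_and_norm_eq_p
    (n p h g : ℕ)
    (hn : n.Prime) (hnodd : Odd n)
    (hp : p.Prime)
    (hph : p = n * h + 1)
    (hg : orderOf (g : ZMod p) = p - 1)
    (S : Zf n p h g ≃ₐ[ℚ] Zf n p h g)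
    (hS : ∀ s : ℕ, (((S ^ s) (etaZ n p h g) : Zf n p h g) : ℂ) = gaussPeriod n p h g s) :
    ∃ β : Zf n p h g,
      (β : ℂ) = (∏ r ∈ Finset.range h, (1 - zetaC p ^ (g ^ (n * r)))) ∧
      IsIntegral ℤ β ∧
      Algebra.norm ℚ β = (p : ℚ) ∧
      ∏ s ∈ Finset.range n, (S ^ s) β = (p : Zf n p h g) := by
  exact beta_integral_and_norm_eq_p_general n p h g hp hph hg S (by simpa using hS 1)

end
end
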